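/- arXiv:1506.07708 — 6 statements merged into one kernel-verified Lean document; each statement's English description precedes it below -/
import Mathlib

section
/- There exists K_{02}>0 such that for each K0≥K_{02} there exist ε0>0, A≥1 and s_{0,1}(K0,ε0,A)≥0 such that for all T>0 with s0=−log T≥s_{0,1} and every 0<η0≤1, there exists a closed rectangle D_T⊂[−2,2]² such that for all (d0,d1)∈D_T, the initial data u0(·,d0,d1) belongs to S*(K0,ε0,A,η0,T,0). -/
noncomputable section

open Real Set Filter Topology MeasureTheory

/-- A smooth cutoff function: `χ0 = 1` on `[-1,1]`, `χ0 = 0` outside `[-2,2]`,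
with values in `[0,1]`. -/
def IsCutoff (χ0 : ℝ → ℝ) : Prop :=
  ContDiff ℝ (⊤ : ℕ∞) χ0 ∧ (∀ ξ, χ0 ξ ∈ Set.Icc (0:ℝ) 1) ∧
    (∀ ξ, |ξ| ≤ 1 → χ0 ξ = 1) ∧ (∀ ξ, 2 ≤ |ξ| → χ0 ξ = 0)

/-- `u` is a `2π`-periodic classical solution of `∂ₜ u = ∂_θ² u + |u|^{p-1} u` on `ℝ × [0,T)`. -/
def IsSolHeat (p T : ℝ) (u : ℝ → ℝ → ℝ) : Prop :=
  ∀ t ∈ Set.Ico (0:ℝ) T,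
    (∀ θ, u (θ + 2*π) t = u θ t) ∧
    ContDiff ℝ 2 (fun θ => u θ t) ∧
    ∀ θ, HasDerivWithinAt (fun τ => u θ τ)
      (deriv (deriv (fun x => u x t)) θ + |u θ t| ^ (p-1) * u θ t) (Set.Ico (0:ℝ) T) t

/-- The blow-up profile `f(z) = (p-1+b z²)^{-1/(p-1)}`, `b = (p-1)²/(4p)`. -/
def fprof (p z : ℝ) : ℝ := (p - 1 + (p-1)^2/(4*p) * z^2) ^ (-(1/(p-1)))

/-- `κ = (p-1)^{-1/(p-1)}`. -/
def kap (p : ℝ) : ℝ := (p - 1) ^ (-(1/(p-1)))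

/-- The profile `φ(y,s) = f(y/√s) + κ/(4ps)`. -/
def phi (p y s : ℝ) : ℝ := fprof p (y / Real.sqrt s) + kap p / (4*p*s)

/-- Self-similar variable at time slice: given `v = u(·,t)` with `t = T - e^{-s}`,
`W(y,s) = e^{-s/(p-1)} v(y e^{-s/2})`. -/
def Wsl (p : ℝ) (v : ℝ → ℝ) (s y : ℝ) : ℝ :=
  Real.exp (-(s/(p-1))) * v (y * Real.exp (-(s/2)))

/-- Truncated self-similar solution `w = W·χ` for `|y| ≤ π e^{s/2}`, `0` otherwise. -/
def wsl (p ε0 : ℝ) (χ0 : ℝ → ℝ) (v : ℝ → ℝ) (s y : ℝ) : ℝ :=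
  if |y| ≤ π * Real.exp (s/2) then Wsl p v s y * χ0 (y * Real.exp (-(s/2)) / ε0) else 0

/-- `q = w - φ`. -/
def qsl (p ε0 : ℝ) (χ0 : ℝ → ℝ) (v : ℝ → ℝ) (s y : ℝ) : ℝ :=
  wsl p ε0 χ0 v s y - phi p y s

/-- Gaussian weight `ρ(y) = e^{-y²/4}/√(4π)`. -/
def rho (y : ℝ) : ℝ := Real.exp (-(y^2/4)) / Real.sqrt (4*π)

/-- Dilated Hermite polynomials. -/
def hpoly (m : ℕ) (y : ℝ) : ℝ :=
  ∑ n ∈ Finset.range (m/2 + 1),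
    ((m.factorial : ℝ) / ((n.factorial : ℝ) * ((m - 2*n).factorial : ℝ))) * (-1)^n * y^(m - 2*n)

/-- Normalized Hermite polynomials `k_m = h_m / ‖h_m‖²_{L²_ρ}`. -/
def kpoly (m : ℕ) (y : ℝ) : ℝ := hpoly m y / (∫ x, (hpoly m x)^2 * rho x)

/-- The inner cut-off `χ1(y,s) = χ0(|y|/(K0 √s))`. -/
def chi1 (K0 : ℝ) (χ0 : ℝ → ℝ) (y s : ℝ) : ℝ := χ0 (|y| / (K0 * Real.sqrt s))

/-- The component `q_m(s)` of `q`, `m = 0,1,2`. -/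
def qm (p ε0 K0 : ℝ) (χ0 : ℝ → ℝ) (v : ℝ → ℝ) (m : ℕ) (s : ℝ) : ℝ :=
  ∫ y, kpoly m y * chi1 K0 χ0 y s * qsl p ε0 χ0 v s y * rho y

/-- The negative part `q₋(y,s)`. -/
def qminus (p ε0 K0 : ℝ) (χ0 : ℝ → ℝ) (v : ℝ → ℝ) (s y : ℝ) : ℝ :=
  chi1 K0 χ0 y s * qsl p ε0 χ0 v s y - ∑ m ∈ Finset.range 3, qm p ε0 K0 χ0 v m s * hpoly m y

/-- The outer part `q_e(y,s)`. -/
def qe (p ε0 K0 : ℝ) (χ0 : ℝ → ℝ) (v : ℝ → ℝ) (s y : ℝ) : ℝ :=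
  (1 - chi1 K0 χ0 y s) * qsl p ε0 χ0 v s y

/-- `q(·,s) ∈ V_{K0,A}(s)`. -/
def inV (p ε0 K0 A : ℝ) (χ0 : ℝ → ℝ) (v : ℝ → ℝ) (s : ℝ) : Prop :=
  |qm p ε0 K0 χ0 v 0 s| ≤ A / s^2 ∧ |qm p ε0 K0 χ0 v 1 s| ≤ A / s^2 ∧
  |qm p ε0 K0 χ0 v 2 s| ≤ A^2 * Real.log s / s^2 ∧
  (∀ y, |qminus p ε0 K0 χ0 v s y| ≤ A / s^2 * (1 + |y|^3)) ∧
  (∀ y, |qe p ε0 K0 χ0 v s y| ≤ A / Real.sqrt s)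

/-- `u(t) ∈ S*(K0,ε0,A,η0,T,t)`. -/
def inS (p ε0 K0 A η0 T : ℝ) (χ0 : ℝ → ℝ) (u : ℝ → ℝ → ℝ) (t : ℝ) : Prop :=
  inV p ε0 K0 A χ0 (fun θ => u θ t) (-Real.log (T - t)) ∧
  ∀ θ, ε0/2 ≤ |θ| → |θ| ≤ π → |u θ t| ≤ η0

/-- Initial data on the base interval `[-π,π]`. -/
def u0base (p ε0 K0 A T d0 d1 : ℝ) (χ0 : ℝ → ℝ) (θ : ℝ) : ℝ :=
  T ^ (-(1/(p-1))) *
    (phi p (θ / Real.sqrt T) (-Real.log T) *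
        χ0 (8 * (θ / Real.sqrt T) * Real.exp (-(-Real.log T)/2) / ε0) +
      A / (-Real.log T)^2 * (d0 + d1 * (θ / Real.sqrt T)) *
        chi1 K0 χ0 (2 * (θ / Real.sqrt T)) (-Real.log T))

/-- Initial data, extended `2π`-periodically. -/
def u0init (p ε0 K0 A T d0 d1 : ℝ) (χ0 : ℝ → ℝ) (θ : ℝ) : ℝ :=
  u0base p ε0 K0 A T d0 d1 χ0 (θ - 2*π*(⌊(θ + π)/(2*π)⌋ : ℝ))


/-- On `[-π,π)` the periodic extension agrees with the base data. -/
lemma u0init_eq_u0base {p ε0 K0 A T d0 d1 : ℝ} {χ0 : ℝ → ℝ} {θ : ℝ} (h₁ : -π ≤ θ) (h₂ : θ < π) :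
    u0init p ε0 K0 A T d0 d1 χ0 θ = u0base p ε0 K0 A T d0 d1 χ0 θ := by
  have hfl : ⌊(θ + π) / (2 * π)⌋ = 0 := by
    rw [Int.floor_eq_zero_iff]
    exact ⟨by have := pi_pos; apply div_nonneg <;> linarith,
      by rw [div_lt_one (by positivity)]; linarith⟩
  simp [u0init, hfl]

lemma u0init_pi {p ε0 K0 A T d0 d1 : ℝ} {χ0 : ℝ → ℝ} :
    u0init p ε0 K0 A T d0 d1 χ0 π = u0base p ε0 K0 A T d0 d1 χ0 (-π) := by
  have hfl : ⌊(π + π) / (2 * π)⌋ = 1 := by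
    rw [show (π + π) / (2 * π) = 1 by rw [← two_mul]; exact div_self (by positivity)]
    simp
  rw [u0init, hfl]
  congr 1
  push_cast
  ring

/-- The base data written with `T = e^{-s}`. -/
lemma u0base_exp (p ε0 K0 A d0 d1 s θ : ℝ) (χ0 : ℝ → ℝ) :
    u0base p ε0 K0 A (exp (-s)) d0 d1 χ0 θ =
      exp (s / (p - 1)) * (phi p (θ * exp (s / 2)) s * χ0 (8 * θ / ε0) +
        A / s ^ 2 * (d0 + d1 * (θ * exp (s / 2))) * chi1 K0 χ0 (2 * (θ * exp (s / 2))) s) := by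
  have h₁ : θ / √(exp (-s)) = θ * exp (s / 2) := by
    rw [← exp_half, div_eq_mul_inv, ← exp_neg]
    congr 2
    ring
  have h₂ : exp (-s) ^ (-(1 / (p - 1))) = exp (s / (p - 1)) := by
    rw [← exp_mul]
    congr 1
    ring
  have h₃ : 8 * (θ * exp (s / 2)) * exp (-s / 2) / ε0 = 8 * θ / ε0 := by
    rw [show 8 * (θ * exp (s / 2)) * exp (-s / 2) = 8 * θ * (exp (s / 2) * exp (-s / 2)) by ring,
      ← exp_add, show s / 2 + -s / 2 = 0 by ring, exp_zero, mul_one]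
  simp only [u0base, log_exp, neg_neg, h₁, h₂, h₃]

/-- The inner cutoff vanishes outside its support. -/
lemma chi1_eq_zero {χ0 : ℝ → ℝ} (hχ0 : IsCutoff χ0) {K0 s y : ℝ} (hK : 0 < K0 * √s)
    (hy : 2 * (K0 * √s) ≤ |y|) : chi1 K0 χ0 y s = 0 := by
  apply hχ0.2.2.2
  rwa [abs_of_nonneg (by positivity), le_div_iff₀ hK]

/-- The inner cutoff equals one on its plateau. -/
lemma chi1_eq_one {χ0 : ℝ → ℝ} (hχ0 : IsCutoff χ0) {K0 s y : ℝ} (hK : 0 < K0 * √s)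
    (hy : |y| ≤ K0 * √s) : chi1 K0 χ0 y s = 1 := by
  apply hχ0.2.2.1
  rwa [abs_of_nonneg (by positivity), div_le_one hK]

/-- The doubled inner cutoff is supported where the inner cutoff equals one. -/
lemma chi1_mul_chi1_two_mul {χ0 : ℝ → ℝ} (hχ0 : IsCutoff χ0) {K0 s : ℝ} (hK : 0 < K0 * √s)
    (y : ℝ) : chi1 K0 χ0 y s * chi1 K0 χ0 (2 * y) s = chi1 K0 χ0 (2 * y) s := by
  rcases le_total |y| (K0 * √s) with h | h
  · rw [chi1_eq_one hχ0 hK h, one_mul]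
  · rw [chi1_eq_zero hχ0 hK (y := 2 * y) (by rw [abs_mul, abs_two]; linarith), mul_zero]

/-- Outside `|θ| < 1/2` the initial data with `ε0 = 1` vanish on the base interval. -/
lemma u0base_eq_zero {χ0 : ℝ → ℝ} (hχ0 : IsCutoff χ0) {p K0 A s d0 d1 θ : ℝ} (hK : 0 < K0 * √s)
    (hs : 16 * (K0 * √s) ≤ exp (s / 2)) (hθ : 1 / 2 ≤ |θ|) :
    u0base p 1 K0 A (exp (-s)) d0 d1 χ0 θ = 0 := by
  have h₁ : χ0 (8 * θ / 1) = 0 := by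
    apply hχ0.2.2.2
    rw [div_one, abs_mul, abs_of_pos (by norm_num : (0:ℝ) < 8)]
    linarith
  have h₂ : chi1 K0 χ0 (2 * (θ * exp (s / 2))) s = 0 := by
    apply chi1_eq_zero hχ0 hK
    rw [abs_mul, abs_two, abs_mul, abs_of_pos (exp_pos _)]
    nlinarith [exp_pos (s / 2)]
  rw [u0base_exp, h₁, h₂]
  simp

/-- For the initial data with `ε0 = 1`, `q` is the sum of a far-field truncation error of `φ` and
of the two-parameter perturbation. -/
lemma qsl_u0init {χ0 : ℝ → ℝ} (hχ0 : IsCutoff χ0) {p K0 A s d0 d1 : ℝ} (hK : 0 < K0 * √s)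
    (hs : 16 * (K0 * √s) ≤ exp (s / 2)) (y : ℝ) :
    qsl p 1 χ0 (u0init p 1 K0 A (exp (-s)) d0 d1 χ0) s y =
      A / s ^ 2 * (d0 + d1 * y) * chi1 K0 χ0 (2 * y) s
        - phi p y s * (1 - χ0 (8 * (y * exp (-(s / 2))))) := by
  have hy : y * exp (-(s / 2)) * exp (s / 2) = y := by
    rw [mul_assoc, ← exp_add]; simp
  have habs : |y| = |y * exp (-(s / 2))| * exp (s / 2) := by
    conv_lhs => rw [← hy, abs_mul, abs_of_pos (exp_pos (s / 2))]
  have hW : |y * exp (-(s / 2))| < 3 →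
      Wsl p (u0init p 1 K0 A (exp (-s)) d0 d1 χ0) s y =
        phi p y s * χ0 (8 * (y * exp (-(s / 2)))) +
          A / s ^ 2 * (d0 + d1 * y) * chi1 K0 χ0 (2 * y) s := by
    intro h
    have h3 := pi_gt_three
    rw [abs_lt] at h
    rw [Wsl, u0init_eq_u0base (by linarith) (by linarith), u0base_exp, hy, ← mul_assoc, ← exp_add,
      neg_add_cancel, exp_zero, one_mul, div_one]
  rw [qsl]
  rcases le_total |y * exp (-(s / 2))| 1 with h | h
  · have hle : |y| ≤ π * exp (s / 2) := by
      rw [habs]; have := pi_gt_three; gcongr; linarith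
    rw [wsl, if_pos hle, hW (by linarith),
      hχ0.2.2.1 (y * exp (-(s / 2)) / 1) (by rwa [div_one])]
    ring
  · have h₁ : χ0 (8 * (y * exp (-(s / 2)))) = 0 := by
      apply hχ0.2.2.2
      rw [abs_mul, abs_of_pos (by norm_num : (0:ℝ) < 8)]
      linarith
    have h₂ : chi1 K0 χ0 (2 * y) s = 0 := by
      apply chi1_eq_zero hχ0 hK
      rw [abs_mul, abs_two, habs]
      nlinarith [exp_pos (s / 2)]
    have hw : wsl p 1 χ0 (u0init p 1 K0 A (exp (-s)) d0 d1 χ0) s y = 0 := by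
      rw [wsl]
      split_ifs
      · rcases lt_or_ge |y * exp (-(s / 2))| 2 with h' | h'
        · rw [hW (by linarith), h₁, h₂]; simp
        · rw [hχ0.2.2.2 _ (by rwa [div_one]), mul_zero]
      · rfl
    rw [hw, h₁, h₂]
    ring

/-- In the inner region only the two-parameter perturbation contributes to `q`. -/
lemma chi1_mul_qsl_u0init {χ0 : ℝ → ℝ} (hχ0 : IsCutoff χ0) {p K0 A s d0 d1 : ℝ}
    (hK : 0 < K0 * √s) (hs : 16 * (K0 * √s) ≤ exp (s / 2)) (y : ℝ) :
    chi1 K0 χ0 y s * qsl p 1 χ0 (u0init p 1 K0 A (exp (-s)) d0 d1 χ0) s y =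
      A / s ^ 2 * (d0 + d1 * y) * chi1 K0 χ0 (2 * y) s := by
  have hfar : chi1 K0 χ0 y s * (1 - χ0 (8 * (y * exp (-(s / 2))))) = 0 := by
    rcases le_total (2 * (K0 * √s)) |y| with h | h
    · rw [chi1_eq_zero hχ0 hK h, zero_mul]
    · rw [hχ0.2.2.1, sub_self, mul_zero]
      rw [abs_mul, abs_mul, abs_of_pos (exp_pos _), abs_of_pos (by norm_num : (0:ℝ) < 8)]
      calc 8 * (|y| * exp (-(s / 2))) ≤ exp (s / 2) * exp (-(s / 2)) := by
            rw [← mul_assoc]; gcongr; linarith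
        _ = 1 := by rw [← exp_add]; simp
  rw [qsl_u0init hχ0 hK hs]
  linear_combination (A / s ^ 2 * (d0 + d1 * y)) * chi1_mul_chi1_two_mul hχ0 hK y
    - phi p y s * hfar

/-- In the outer region only the truncation error of `φ` contributes to `q`. -/
lemma qe_u0init {χ0 : ℝ → ℝ} (hχ0 : IsCutoff χ0) {p K0 A s d0 d1 : ℝ}
    (hK : 0 < K0 * √s) (hs : 16 * (K0 * √s) ≤ exp (s / 2)) (y : ℝ) :
    qe p 1 K0 χ0 (u0init p 1 K0 A (exp (-s)) d0 d1 χ0) s y =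
      -(phi p y s * (1 - χ0 (8 * (y * exp (-(s / 2)))))) := by
  rw [qe, sub_mul, chi1_mul_qsl_u0init hχ0 hK hs, qsl_u0init hχ0 hK hs]
  ring

lemma kap_pos {p : ℝ} (hp : 1 < p) : 0 < kap p := rpow_pos_of_pos (by linarith) _

lemma phi_nonneg {p : ℝ} (hp : 1 < p) {s : ℝ} (hs : 0 ≤ s) (y : ℝ) : 0 ≤ phi p y s := by
  have h₁ : 0 ≤ p - 1 := by linarith
  have h₂ : 0 ≤ kap p := (kap_pos hp).le
  have h₃ : 0 < p := by linarith
  unfold phi fprof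
  positivity

/-- The profile is eventually below `1/√s` in the region `|y| ≥ e^{s/2}/8`. -/
lemma eventually_phi_le {p : ℝ} (hp : 1 < p) :
    ∀ᶠ s in atTop, ∀ y, exp (s / 2) ≤ 8 * |y| → phi p y s ≤ 1 / √s := by
  have hp1 : 0 < p - 1 := by linarith
  have hp0 : 0 < p := by linarith
  have hb : 0 < (p - 1) ^ 2 / (4 * p) := by positivity
  have hbd := (isLittleO_rpow_exp_atTop (1 + (p - 1) / 2)).bound
    (c := (p - 1) ^ 2 / (4 * p) / (64 * 4 ^ ((p - 1) / 2))) (by positivity)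
  filter_upwards [hbd, eventually_ge_atTop 1, eventually_ge_atTop ((kap p / (2 * p)) ^ 2)]
    with s hsE hs1 hsκ y hy
  have hs0 : 0 < s := by linarith
  have hsq : 0 < √s := sqrt_pos.2 hs0
  rw [norm_of_nonneg (by positivity), norm_of_nonneg (exp_pos _).le, div_mul_eq_mul_div,
    le_div_iff₀ (by positivity), rpow_add hs0, rpow_one] at hsE
  have hpow : (2 * √s) ^ (p - 1) = 4 ^ ((p - 1) / 2) * s ^ ((p - 1) / 2) := by
    rw [← mul_rpow (by norm_num) hs0.le, show 2 * √s = √(4 * s) by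
      rw [sqrt_mul (by norm_num), show (4:ℝ) = 2 ^ 2 by norm_num, sqrt_sq (by norm_num)],
      sqrt_eq_rpow, ← rpow_mul (by positivity)]
    congr 1
    ring
  have hy2 : exp s ≤ 64 * y ^ 2 := by
    have h := pow_le_pow_left₀ (exp_pos _).le hy 2
    rw [← exp_nat_mul, mul_pow, sq_abs] at h
    norm_num at h
    rwa [mul_div_cancel₀ _ (by norm_num)] at h
  have hbase : (2 * √s) ^ (p - 1) ≤ p - 1 + (p - 1) ^ 2 / (4 * p) * (y / √s) ^ 2 := by
    rw [hpow, div_pow, sq_sqrt hs0.le]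
    have h : 4 ^ ((p - 1) / 2) * s ^ ((p - 1) / 2) ≤ (p - 1) ^ 2 / (4 * p) * (y ^ 2 / s) := by
      rw [← mul_div_assoc, le_div_iff₀ hs0]
      nlinarith [mul_le_mul_of_nonneg_left hy2 hb.le]
    linarith
  have hf : fprof p (y / √s) ≤ 1 / (2 * √s) := by
    calc fprof p (y / √s) ≤ ((2 * √s) ^ (p - 1)) ^ (-(1 / (p - 1))) :=
          rpow_le_rpow_of_nonpos (by positivity) hbase (by simp [hp1.le])
      _ = 1 / (2 * √s) := by
          rw [← rpow_mul (by positivity), show (p - 1) * -(1 / (p - 1)) = -1 by field_simp,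
            rpow_neg_one, one_div]
  have hk : kap p / (4 * p * s) ≤ 1 / (2 * √s) := by
    have h : kap p / (2 * p) ≤ √s := le_sqrt_of_sq_le hsκ
    rw [div_le_iff₀ (by positivity)] at h
    rw [div_le_div_iff₀ (by positivity) (by positivity)]
    nlinarith [sq_sqrt hs0.le]
  calc phi p y s ≤ 1 / (2 * √s) + 1 / (2 * √s) := add_le_add hf hk
    _ = 1 / √s := by field_simp; norm_num

/-- The inner region eventually lies inside the region where the truncation is inactive. -/
lemma eventually_sqrt_le_exp (K0 : ℝ) :
    ∀ᶠ s in atTop, 16 * (K0 * √s) ≤ exp (s / 2) := by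
  have hbd := (isLittleO_rpow_exp_atTop 1).bound (c := 1 / (256 * (K0 ^ 2 + 1))) (by positivity)
  filter_upwards [hbd, eventually_ge_atTop 0] with s hsE hs0
  rw [rpow_one, norm_of_nonneg hs0, norm_of_nonneg (exp_pos _).le, div_mul_eq_mul_div,
    le_div_iff₀ (by positivity)] at hsE
  apply le_of_sq_le_sq _ (exp_pos _).le
  rw [← exp_nat_mul, mul_pow, mul_pow, sq_sqrt hs0]
  norm_num
  rw [mul_div_cancel₀ _ (by norm_num)]
  nlinarith

lemma abs_hpoly_le {m : ℕ} (hm : m < 3) (y : ℝ) : |hpoly m y| ≤ 2 + |y| ^ 2 := by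
  have h := abs_nonneg y
  interval_cases m
  · simp [hpoly]; nlinarith
  · simp [hpoly]; nlinarith [sq_nonneg (|y| - 1), sq_abs y]
  · simp only [hpoly, Finset.sum_range_succ]
    norm_num [Nat.factorial]
    rw [abs_le]
    constructor <;> nlinarith

lemma rho_nonneg (y : ℝ) : 0 ≤ rho y := by unfold rho; positivity

lemma integrable_pow_mul_rho : Integrable (fun y : ℝ => 8 * (1 + |y| ^ 4) * rho y) := by
  have h₀ := integrable_exp_neg_mul_sq (b := 1 / 4) (by norm_num)
  have h₄ := integrable_rpow_mul_exp_neg_mul_sq (b := 1 / 4) (by norm_num) (s := 4) (by norm_num)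
  refine ((h₀.add h₄).const_mul (8 / √(4 * π))).congr (Eventually.of_forall fun y => ?_)
  have hy : |y| ^ 4 = y ^ (4:ℝ) := by
    rw [show (4:ℝ) = ((4:ℕ) : ℝ) by norm_num, rpow_natCast, Even.pow_abs (by decide)]
  simp only [Pi.add_apply, rho, hy]
  rw [show -(y ^ 2 / 4) = -(1 / 4) * y ^ 2 by ring]
  ring

/-- A pointwise bound, linear in the parameters, for the perturbation in the initial data. -/
lemma abs_perturbation_le {χ0 : ℝ → ℝ} (hχ0 : IsCutoff χ0) {K0 A s d0 d1 δ : ℝ} (hA : 0 ≤ A)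
    (hd0 : |d0| ≤ δ) (hd1 : |d1| ≤ δ) (y : ℝ) :
    |A / s ^ 2 * (d0 + d1 * y) * chi1 K0 χ0 (2 * y) s| ≤ A / s ^ 2 * (δ * (1 + |y|)) := by
  obtain ⟨hχ₀, hχ₁⟩ : chi1 K0 χ0 (2 * y) s ∈ Icc (0:ℝ) 1 := hχ0.2.1 _
  have hlin : |d0 + d1 * y| ≤ δ * (1 + |y|) := by
    calc |d0 + d1 * y| ≤ |d0| + |d1| * |y| := by rw [← abs_mul]; exact abs_add_le _ _
      _ ≤ δ + δ * |y| := by gcongr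
      _ = δ * (1 + |y|) := by ring
  rw [abs_mul, abs_mul, abs_of_nonneg (by positivity : 0 ≤ A / s ^ 2), abs_of_nonneg hχ₀]
  exact (mul_le_of_le_one_right (by positivity) hχ₁).trans (by gcongr)

/-- A bound, linear in the parameters, for the first three modes of the initial data. -/
lemma abs_qm_u0init_le {χ0 : ℝ → ℝ} (hχ0 : IsCutoff χ0) {p K0 A s d0 d1 δ : ℝ} {m : ℕ}
    (hm : m < 3) (hA : 0 ≤ A) (hK : 0 < K0 * √s) (hs : 16 * (K0 * √s) ≤ exp (s / 2))
    (hd0 : |d0| ≤ δ) (hd1 : |d1| ≤ δ) :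
    |qm p 1 K0 χ0 (u0init p 1 K0 A (exp (-s)) d0 d1 χ0) m s| ≤
      A / s ^ 2 * δ * ((∫ y, 8 * (1 + |y| ^ 4) * rho y) / |∫ x, hpoly m x ^ 2 * rho x|) := by
  set N := |∫ x, hpoly m x ^ 2 * rho x| with hN
  have hδ : 0 ≤ δ := (abs_nonneg _).trans hd0
  have hbound : ∀ y, ‖kpoly m y * chi1 K0 χ0 y s *
      qsl p 1 χ0 (u0init p 1 K0 A (exp (-s)) d0 d1 χ0) s y * rho y‖ ≤
      A / s ^ 2 * δ / N * (8 * (1 + |y| ^ 4) * rho y) := by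
    intro y
    have hy := abs_nonneg y
    rw [mul_assoc (kpoly m y), chi1_mul_qsl_u0init hχ0 hK hs, norm_eq_abs, abs_mul, abs_mul,
      kpoly, abs_div, ← hN, abs_of_nonneg (rho_nonneg y)]
    have hpol : (2 + |y| ^ 2) * (1 + |y|) ≤ 8 * (1 + |y| ^ 4) := by
      nlinarith [sq_nonneg (|y| - 1), sq_nonneg (|y| ^ 2 - 1), sq_nonneg (|y| ^ 2 - |y|)]
    have hρ := rho_nonneg y
    calc |hpoly m y| / N * |A / s ^ 2 * (d0 + d1 * y) * chi1 K0 χ0 (2 * y) s| * rho y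
        ≤ (2 + |y| ^ 2) / N * (A / s ^ 2 * (δ * (1 + |y|))) * rho y := by
          gcongr
          · exact abs_hpoly_le hm y
          · exact abs_perturbation_le hχ0 hA hd0 hd1 y
      _ = A / s ^ 2 * δ / N * ((2 + |y| ^ 2) * (1 + |y|) * rho y) := by ring
      _ ≤ A / s ^ 2 * δ / N * (8 * (1 + |y| ^ 4) * rho y) := by gcongr
  calc _ ≤ ∫ y, A / s ^ 2 * δ / N * (8 * (1 + |y| ^ 4) * rho y) :=
        norm_integral_le_of_norm_le (integrable_pow_mul_rho.const_mul _)
          (Eventually.of_forall hbound)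
    _ = _ := by rw [integral_const_mul]; ring

/-- Choice of the parameters `(d0,d1)` so that the initial data belong to `S*(0)`. -/
theorem initial_data_in_S (p : ℝ) (hp : 1 < p) (χ0 : ℝ → ℝ) (hχ0 : IsCutoff χ0) :
    ∃ K02 > (0:ℝ), ∀ K0 ≥ K02, ∃ ε0 > (0:ℝ), ∃ A ≥ (1:ℝ), ∃ s01 ≥ (0:ℝ),
    ∀ T, 0 < T → s01 ≤ -Real.log T → ∀ η0, 0 < η0 → η0 ≤ 1 →
    ∃ a b c d : ℝ, a ≤ b ∧ c ≤ d ∧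
      (Set.Icc a b ×ˢ Set.Icc c d : Set (ℝ × ℝ)) ⊆ Set.Icc (-2) 2 ×ˢ Set.Icc (-2) 2 ∧
      ∀ d0 d1 : ℝ, (d0, d1) ∈ (Set.Icc a b ×ˢ Set.Icc c d : Set (ℝ × ℝ)) →
        inS p ε0 K0 A η0 T χ0 (fun θ _ => u0init p ε0 K0 A T d0 d1 χ0 θ) 0 := by
  set M : ℕ → ℝ := fun m =>
    (∫ y, 8 * (1 + |y| ^ 4) * rho y) / |∫ x, hpoly m x ^ 2 * rho x| with hM
  have hM0 : ∀ m, 0 ≤ M m := fun m => by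
    have : 0 ≤ ∫ y, 8 * (1 + |y| ^ 4) * rho y :=
      integral_nonneg fun y => mul_nonneg (by positivity) (rho_nonneg y)
    exact div_nonneg this (abs_nonneg _)
  set C := M 0 + M 1 + M 2 with hC
  have hC0 : 0 ≤ C := add_nonneg (add_nonneg (hM0 0) (hM0 1)) (hM0 2)
  have hMC : ∀ m < 3, M m ≤ C := by
    intro m hm
    have h0 := hM0 0
    have h1 := hM0 1
    have h2 := hM0 2
    interval_cases m <;> linarith
  set δ := 1 / (2 + 9 * C) with hδ
  have hδ0 : 0 < δ := by positivity
  have hδC : δ * (2 + 9 * C) = 1 := by rw [hδ]; field_simp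
  refine ⟨1, one_pos, fun K0 hK0 => ⟨1, one_pos, 1, le_rfl, ?_⟩⟩
  obtain ⟨s₁, hs₁⟩ := eventually_atTop.1 ((eventually_phi_le hp).and
    ((eventually_sqrt_le_exp K0).and (eventually_ge_atTop (exp 1))))
  refine ⟨max 0 s₁, le_max_left _ _, fun T hT hsT η0 hη0 _ => ?_⟩
  obtain ⟨s, rfl⟩ : ∃ s, T = exp (-s) := ⟨-log T, by rw [neg_neg, exp_log hT]⟩
  rw [log_exp, neg_neg] at hsT
  obtain ⟨hφ, hs, hse⟩ := hs₁ s ((le_max_right _ _).trans hsT)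
  have hs0 : 0 < s := (exp_pos 1).trans_le hse
  have hlog : 1 ≤ log s := (le_log_iff_exp_le hs0).2 hse
  have hK : 0 < K0 * √s := mul_pos (by linarith) (sqrt_pos.2 hs0)
  have hδ2 : δ ≤ 2 := by nlinarith
  refine ⟨-δ, δ, -δ, δ, by linarith, by linarith, ?_, ?_⟩
  · exact Set.prod_mono (Icc_subset_Icc (by linarith) hδ2) (Icc_subset_Icc (by linarith) hδ2)
  rintro d0 d1 ⟨hd0, hd1⟩
  replace hd0 : |d0| ≤ δ := abs_le.2 hd0
  replace hd1 : |d1| ≤ δ := abs_le.2 hd1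
  have hqm : ∀ m < 3, |qm p 1 K0 χ0 (u0init p 1 K0 1 (exp (-s)) d0 d1 χ0) m s| ≤
      1 / s ^ 2 * (δ * C) := by
    intro m hm
    refine (abs_qm_u0init_le hχ0 hm zero_le_one hK hs hd0 hd1).trans ?_
    rw [mul_assoc]
    gcongr
    exact hMC m hm
  have hqm' : ∀ m < 3, |qm p 1 K0 χ0 (u0init p 1 K0 1 (exp (-s)) d0 d1 χ0) m s| ≤ 1 / s ^ 2 := by
    intro m hm
    refine (hqm m hm).trans (mul_le_of_le_one_right (by positivity) ?_)
    nlinarith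
  refine ⟨?_, ?_⟩
  · rw [sub_zero, log_exp, neg_neg]
    refine ⟨hqm' 0 (by norm_num), hqm' 1 (by norm_num), ?_, fun y => ?_, fun y => ?_⟩
    · refine (hqm' 2 (by norm_num)).trans ?_
      rw [one_pow, one_mul]
      gcongr
    · have hy := abs_nonneg y
      have hsum : |∑ m ∈ Finset.range 3, qm p 1 K0 χ0
          (u0init p 1 K0 1 (exp (-s)) d0 d1 χ0) m s * hpoly m y| ≤
          3 * (1 / s ^ 2 * (δ * C) * (2 + |y| ^ 2)) := by
        refine (Finset.abs_sum_le_sum_abs _ _).trans ((Finset.sum_le_card_nsmul _ _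
          (1 / s ^ 2 * (δ * C) * (2 + |y| ^ 2)) fun m hm => ?_).trans (by simp))
        rw [abs_mul]
        have hm3 := Finset.mem_range.1 hm
        exact mul_le_mul (hqm m hm3) (abs_hpoly_le hm3 y) (abs_nonneg _) (by positivity)
      have h₁ : 1 + |y| ≤ 2 * (1 + |y| ^ 3) := by
        nlinarith [mul_nonneg hy (sq_nonneg (|y| - 1)), sq_nonneg (|y| - 1)]
      have h₂ : 2 + |y| ^ 2 ≤ 3 * (1 + |y| ^ 3) := by
        nlinarith [mul_nonneg hy (sq_nonneg (|y| - 1)), sq_nonneg (|y| - 1)]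
      rw [qminus, chi1_mul_qsl_u0init hχ0 hK hs]
      refine (abs_sub _ _).trans ?_
      calc _ ≤ 1 / s ^ 2 * (δ * (2 * (1 + |y| ^ 3))) +
            3 * (1 / s ^ 2 * (δ * C) * (3 * (1 + |y| ^ 3))) := by
            refine add_le_add ?_ (hsum.trans (by gcongr))
            exact (abs_perturbation_le hχ0 zero_le_one hd0 hd1 y).trans (by gcongr)
        _ = 1 / s ^ 2 * (1 + |y| ^ 3) * (δ * (2 + 9 * C)) := by ring
        _ = 1 / s ^ 2 * (1 + |y| ^ 3) := by rw [hδC, mul_one]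
    · rw [qe_u0init hχ0 hK hs, abs_neg]
      rcases le_total (exp (s / 2)) (8 * |y|) with h | h
      · have hφ0 := phi_nonneg hp hs0.le y
        obtain ⟨hc0, hc1⟩ := hχ0.2.1 (8 * (y * exp (-(s / 2))))
        rw [abs_of_nonneg (mul_nonneg hφ0 (by linarith))]
        exact (mul_le_of_le_one_right hφ0 (by linarith)).trans (hφ y h)
      · rw [hχ0.2.2.1, sub_self, mul_zero, abs_zero]
        · positivity
        · rw [abs_mul, abs_mul, abs_of_pos (exp_pos _), abs_of_pos (by norm_num : (0:ℝ) < 8),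
            ← mul_assoc]
          calc 8 * |y| * exp (-(s / 2)) ≤ exp (s / 2) * exp (-(s / 2)) := by gcongr
            _ = 1 := by rw [← exp_add]; simp
  · intro θ hθ hθπ
    have h0 : u0init p 1 K0 1 (exp (-s)) d0 d1 χ0 θ = 0 := by
      obtain ⟨h₁, h₂⟩ := abs_le.1 hθπ
      rcases h₂.lt_or_eq with h | rfl
      · rw [u0init_eq_u0base h₁ h]
        exact u0base_eq_zero hχ0 hK hs hθ
      · rw [u0init_pi]
        exact u0base_eq_zero hχ0 hK hs (by rwa [abs_neg])
    simpa [h0] using hη0.le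

end
end

section
/- For each integer m≥0 there exists a constant C_m>0 such that for every ρ̃>0 and every y∈ℝ: ∫_ℝ e^{ρ̃𝓛}(y,x)(1+|x|^m) dx ≤ C_m e^{ρ̃}(1+|y|^m). -/
noncomputable section

open Real MeasureTheory

/-- The Mehler kernel `e^{ρ̃𝓛}(y,x)` of the operator `𝓛 = ∂_y² − (y/2)∂_y + 1`. -/
def mehler (r y x : ℝ) : ℝ :=
  Real.exp r / Real.sqrt (4*π*(1 - Real.exp (-r))) *
    Real.exp (-((y * Real.exp (-(r/2)) - x)^2 / (4*(1 - Real.exp (-r)))))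

/-- The Mehler kernel in the variable `x = y e^{-ρ̃/2} + s t` with `s = 2 √(1 - e^{-ρ̃})`. -/
lemma mehler_affine {r : ℝ} (hr : 0 < r) (y t : ℝ) :
    mehler r y (y * exp (-(r / 2)) + 2 * √(1 - exp (-r)) * t) =
      (2 * √(1 - exp (-r)))⁻¹ * (exp r / √π * exp (-1 * t ^ 2)) := by
  have hd : 0 < 1 - exp (-r) := by
    have : exp (-r) < 1 := exp_lt_one_iff.2 (by linarith)
    linarith
  have hexp : -((y * exp (-(r / 2)) - (y * exp (-(r / 2)) + 2 * √(1 - exp (-r)) * t)) ^ 2 /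
      (4 * (1 - exp (-r)))) = -1 * t ^ 2 := by
    rw [sub_add_cancel_left, neg_sq, mul_pow, mul_pow, sq_sqrt hd.le]
    field_simp
    ring
  have hsqrt : √(4 * π * (1 - exp (-r))) = 2 * √(1 - exp (-r)) * √π := by
    rw [sqrt_mul (by positivity), sqrt_mul (by norm_num), show (4 : ℝ) = 2 ^ 2 by norm_num,
      sqrt_sq (by norm_num)]
    ring
  rw [mehler, hexp, hsqrt]
  field_simp

/-- Integrals against the Mehler kernel as integrals against a standard Gaussian weight. -/
lemma integral_mehler_mul {r : ℝ} (hr : 0 < r) (y : ℝ) (f : ℝ → ℝ) :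
    ∫ x, mehler r y x * f x = exp r / √π *
      ∫ t, exp (-1 * t ^ 2) * f (y * exp (-(r / 2)) + 2 * √(1 - exp (-r)) * t) := by
  have hs : 0 < 2 * √(1 - exp (-r)) := by
    have : exp (-r) < 1 := exp_lt_one_iff.2 (by linarith)
    have : 0 < √(1 - exp (-r)) := sqrt_pos.2 (by linarith)
    positivity
  have hsubst := Measure.integral_comp_mul_left
    (fun x => mehler r y (y * exp (-(r / 2)) + x) * f (y * exp (-(r / 2)) + x))
    (2 * √(1 - exp (-r)))
  rw [integral_add_left_eq_self (fun x => mehler r y x * f x), abs_of_pos (inv_pos.2 hs),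
    smul_eq_mul] at hsubst
  simp only [mehler_affine hr, mul_assoc (2 * √(1 - exp (-r)))⁻¹, mul_assoc (exp r / √π),
    integral_const_mul] at hsubst
  exact (mul_left_cancel₀ (inv_pos.2 hs).ne' hsubst).symm

lemma integrable_exp_neg_sq_mul_one_add_abs_pow (m : ℕ) :
    Integrable fun t : ℝ => exp (-1 * t ^ 2) * (1 + |t| ^ m) := by
  have hpow : Integrable fun t : ℝ => |t| ^ m * exp (-1 * t ^ 2) := by
    have h := (integrable_rpow_mul_exp_neg_mul_sq one_pos
      (show (-1 : ℝ) < m by linarith [m.cast_nonneg (α := ℝ)])).norm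
    simpa [abs_mul] using h
  refine ((integrable_exp_neg_mul_sq one_pos).add hpow).congr (.of_forall fun t => ?_)
  simp only [Pi.add_apply]
  ring

lemma one_add_abs_add_pow_le (m : ℕ) {a b y t : ℝ} (ha : |a| ≤ |y|) (hb : |b| ≤ 2 * |t|) :
    1 + |a + b| ^ m ≤ 4 ^ m * (1 + |y| ^ m) * (1 + |t| ^ m) := by
  have hadd : |a + b| ^ m ≤ 2 ^ m * (|y| ^ m + 2 ^ m * |t| ^ m) :=
    calc |a + b| ^ m ≤ (|y| + 2 * |t|) ^ m := by
          gcongr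
          exact (abs_add_le a b).trans (add_le_add ha hb)
      _ ≤ 2 ^ (m - 1) * (|y| ^ m + (2 * |t|) ^ m) := add_pow_le (by positivity) (by positivity) m
      _ ≤ 2 ^ m * (|y| ^ m + 2 ^ m * |t| ^ m) := by
          rw [mul_pow]
          gcongr
          · norm_num
          · exact m.sub_le 1
  have hone : (1 : ℝ) ≤ 2 ^ m := one_le_pow₀ (by norm_num)
  have hfour : (4 : ℝ) ^ m = 2 ^ m * 2 ^ m := by rw [← mul_pow]; norm_num
  have hy : 0 ≤ |y| ^ m := by positivity
  have ht : 0 ≤ |t| ^ m := by positivity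
  rw [hfour]
  generalize (2 : ℝ) ^ m = p at *
  have hyt : 0 ≤ p * p * (|y| ^ m * |t| ^ m) := by positivity
  nlinarith [mul_nonneg (mul_nonneg (by linarith : (0 : ℝ) ≤ p) (sub_nonneg.2 hone)) hy]

/-- Moment bound for the Mehler kernel:
`∫ e^{ρ̃𝓛}(y,x)(1+|x|^m) dx ≤ C_m e^{ρ̃}(1+|y|^m)`. -/
theorem mehler_moment_bound (m : ℕ) :
    ∃ C > (0:ℝ), ∀ r > (0:ℝ), ∀ y : ℝ,
      (∫ x : ℝ, mehler r y x * (1 + |x|^m)) ≤ C * Real.exp r * (1 + |y|^m) := by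
  set I : ℝ := ∫ t : ℝ, exp (-1 * t ^ 2) * (1 + |t| ^ m)
  have hI : 0 ≤ I := integral_nonneg fun t => by positivity
  refine ⟨4 ^ m * I / √π + 1, by positivity, fun r hr y => ?_⟩
  have hbound : ∫ t : ℝ, exp (-1 * t ^ 2) *
      (1 + |y * exp (-(r / 2)) + 2 * √(1 - exp (-r)) * t| ^ m) ≤ 4 ^ m * (1 + |y| ^ m) * I := by
    rw [← integral_const_mul]
    refine integral_mono_of_nonneg (.of_forall fun t => by positivity)
      ((integrable_exp_neg_sq_mul_one_add_abs_pow m).const_mul _) (.of_forall fun t => ?_)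
    have ha : |y * exp (-(r / 2))| ≤ |y| := by
      rw [abs_mul, abs_exp]
      exact mul_le_of_le_one_right (abs_nonneg y) (exp_le_one_iff.2 (by linarith))
    have hb : |2 * √(1 - exp (-r)) * t| ≤ 2 * |t| := by
      have hle : √(1 - exp (-r)) ≤ 1 := sqrt_le_one.2 (by linarith [exp_pos (-r)])
      rw [abs_mul, abs_of_nonneg (by positivity)]
      gcongr
      linarith
    exact (mul_le_mul_of_nonneg_left (one_add_abs_add_pow_le m ha hb) (exp_pos _).le).trans_eq
      (by ring)
  rw [integral_mehler_mul hr y fun x => 1 + |x| ^ m]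
  calc _ ≤ exp r / √π * (4 ^ m * (1 + |y| ^ m) * I) := by gcongr
    _ = 4 ^ m * I / √π * exp r * (1 + |y| ^ m) := by ring
    _ ≤ _ := by
      gcongr
      linarith

end
end

section
/- Let p>1. For every C0>0 there exists η0>0 such that: if T∈ℝ, a∈ℝ, r>0, and v is a classical solution of the differential inequality |∂_t v − ∂_x² v| ≤ C0(1+|v|^p) on B(a,r)×[T−r²,T) satisfying |v(x,t)| ≤ η0 (T−t)^{−1/(p−1)} for all (x,t)∈B(a,r)×[T−r²,T), then v does not blow up at (a,T), i.e. v is bounded on B(a,r')×[T−r'²,T) for some 0<r'<r. -/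
noncomputable section

open Real Set Metric

open Filter Topology

theorem nonneg_of_hasDerivAt_of_le_left {f : ℝ → ℝ} {f' t t₁ : ℝ} (ht : t₁ < t)
    (hf : HasDerivAt f f' t) (hmax : ∀ s ∈ Icc t₁ t, f s ≤ f t) : 0 ≤ f' := by
  have h := (hasDerivAt_iff_tendsto_slope_left_right.mp hf).1
  refine ge_of_tendsto h ?_
  filter_upwards [Ioo_mem_nhdsLT ht] with s hs
  rw [slope_def_field]
  exact div_nonneg_of_nonpos (by linarith [hmax s ⟨hs.1.le, hs.2.le⟩]) (by linarith [hs.2])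

theorem IsLocalMax.deriv_deriv_nonpos {f : ℝ → ℝ} {x : ℝ} (hf : IsLocalMax f x)
    (hc : ContinuousAt f x) : deriv (deriv f) x ≤ 0 := by
  by_contra! h
  have hmin := isLocalMin_of_deriv_deriv_pos h hf.deriv_eq_zero hc
  have heq : f =ᶠ[𝓝 x] fun _ => f x := by
    filter_upwards [hf, hmin] with y h1 h2 using le_antisymm h1 h2
  have := heq.deriv.deriv_eq
  simp at this
  linarith

/-- Pointwise form of `∂ₜu − ∂ₓ²u ≤ C` at `(x, t)`. -/
def HeatSubsolutionAt (u : ℝ → ℝ → ℝ) (C x t : ℝ) : Prop :=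
  ContDiffAt ℝ 2 (fun y => u y t) x ∧
    ∃ g, HasDerivAt (fun s => u x s) g t ∧ g - deriv (deriv fun y => u y t) x ≤ C

/-- Comparison principle on a rectangle for a strict classical supersolution `ψ`. -/
theorem le_of_heat_comparison {x₁ x₂ t₁ t₂ : ℝ} {u ψ ψx ψxx ψt : ℝ → ℝ → ℝ}
    (hcont : ContinuousOn (fun q : ℝ × ℝ => u q.1 q.2 - ψ q.1 q.2) (Icc x₁ x₂ ×ˢ Icc t₁ t₂))
    (hbot : ∀ x ∈ Icc x₁ x₂, u x t₁ ≤ ψ x t₁)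
    (hleft : ∀ t ∈ Icc t₁ t₂, u x₁ t ≤ ψ x₁ t)
    (hright : ∀ t ∈ Icc t₁ t₂, u x₂ t ≤ ψ x₂ t)
    (hψx : ∀ x ∈ Ioo x₁ x₂, ∀ t ∈ Ioc t₁ t₂, HasDerivAt (fun y => ψ y t) (ψx x t) x)
    (hψxx : ∀ x ∈ Ioo x₁ x₂, ∀ t ∈ Ioc t₁ t₂, HasDerivAt (fun y => ψx y t) (ψxx x t) x)
    (hψt : ∀ x ∈ Ioo x₁ x₂, ∀ t ∈ Ioc t₁ t₂, HasDerivAt (fun s => ψ x s) (ψt x t) t)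
    {C : ℝ} (hψ : ∀ x ∈ Ioo x₁ x₂, ∀ t ∈ Ioc t₁ t₂, C < ψt x t - ψxx x t)
    (hu : ∀ x ∈ Ioo x₁ x₂, ∀ t ∈ Ioc t₁ t₂, ψ x t < u x t → HeatSubsolutionAt u C x t) :
    ∀ x ∈ Icc x₁ x₂, ∀ t ∈ Icc t₁ t₂, u x t ≤ ψ x t := by
  intro x hx t ht
  obtain ⟨⟨y, s⟩, ⟨hy, hs⟩, hmax⟩ :=
    (isCompact_Icc.prod isCompact_Icc).exists_isMaxOn ⟨(x, t), hx, ht⟩ hcont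
  have hmax' : ∀ z ∈ Icc x₁ x₂, ∀ r ∈ Icc t₁ t₂, u z r - ψ z r ≤ u y s - ψ y s :=
    fun z hz r hr => hmax (a := (z, r)) ⟨hz, hr⟩
  dsimp only at hy hs
  by_contra! hlt
  have hpos : ψ y s < u y s := by linarith [hmax' x hx t ht]
  have hy1 : x₁ < y := lt_of_le_of_ne hy.1 fun h => by
    subst h; linarith [hleft s hs]
  have hy2 : y < x₂ := lt_of_le_of_ne hy.2 fun h => by
    subst h; linarith [hright s hs]
  have hs1 : t₁ < s := lt_of_le_of_ne hs.1 fun h => by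
    subst h; linarith [hbot y hy]
  have hyI : y ∈ Ioo x₁ x₂ := ⟨hy1, hy2⟩
  have hsI : s ∈ Ioc t₁ t₂ := ⟨hs1, hs.2⟩
  obtain ⟨hC2, g, hg, hle⟩ := hu y hyI s hsI hpos
  have htime : 0 ≤ g - ψt y s :=
    nonneg_of_hasDerivAt_of_le_left hs1 (hg.sub (hψt y hyI s hsI))
      fun r hr => hmax' y hy r ⟨hr.1, hr.2.trans hs.2⟩
  have hloc : IsLocalMax (fun z => u z s - ψ z s) y := by
    filter_upwards [Ioo_mem_nhds hy1 hy2] with z hz using hmax' z ⟨hz.1.le, hz.2.le⟩ s hs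
  have hd := hloc.deriv_deriv_nonpos (hC2.continuousAt.sub (hψx y hyI s hsI).continuousAt)
  have hdu : ∀ᶠ z in 𝓝 y, DifferentiableAt ℝ (fun y => u y s) z := by
    filter_upwards [hC2.eventually (by simp)] with z hz using hz.differentiableAt (by simp)
  have heq : deriv (fun z => u z s - ψ z s) =ᶠ[𝓝 y] fun z => deriv (fun y => u y s) z - ψx z s := by
    filter_upwards [hdu, Ioo_mem_nhds hy1 hy2] with z hz hzI
    exact (hz.hasDerivAt.sub (hψx z hzI s hsI)).deriv
  have hdd : DifferentiableAt ℝ (deriv fun y => u y s) y :=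
    ((hC2.fderiv_right (m := 1) (by norm_num)).differentiableAt one_ne_zero).clm_apply
      (differentiableAt_const 1)
  rw [heq.deriv_eq, (hdd.hasDerivAt.fun_sub (hψxx y hyI s hsI)).deriv] at hd
  linarith [hψ y hyI s hsI]

/-- The heat kernel shifted in time by `κ ^ 2` and normalised to have size one on scale `κ`. -/
def shiftedHeatKernel (κ y θ : ℝ) : ℝ :=
  exp (log κ - log (θ + κ ^ 2) / 2 - y ^ 2 / (4 * (θ + κ ^ 2)))

theorem hasDerivAt_shiftedHeatKernel_space {κ y θ : ℝ} :
    HasDerivAt (fun z => shiftedHeatKernel κ z θ)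
      (shiftedHeatKernel κ y θ * (-y / (2 * (θ + κ ^ 2)))) y := by
  have h : HasDerivAt (fun z : ℝ => log κ - log (θ + κ ^ 2) / 2 - z ^ 2 / (4 * (θ + κ ^ 2)))
      (-y / (2 * (θ + κ ^ 2))) y := by
    refine (((hasDerivAt_pow 2 y).div_const (4 * (θ + κ ^ 2))).const_sub _).congr_deriv ?_
    by_cases h0 : θ + κ ^ 2 = 0
    · simp [h0]
    · field_simp; ring
  exact h.exp

theorem hasDerivAt_shiftedHeatKernel_space_space {κ y θ : ℝ} :
    HasDerivAt (fun z => shiftedHeatKernel κ z θ * (-z / (2 * (θ + κ ^ 2))))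
      (shiftedHeatKernel κ y θ *
        (y ^ 2 / (4 * (θ + κ ^ 2) ^ 2) - 1 / (2 * (θ + κ ^ 2)))) y := by
  refine (hasDerivAt_shiftedHeatKernel_space.mul
    ((hasDerivAt_neg' y).div_const (2 * (θ + κ ^ 2)))).congr_deriv ?_
  by_cases h0 : θ + κ ^ 2 = 0
  · simp [h0]
  · field_simp; ring

theorem hasDerivAt_shiftedHeatKernel_time {κ y θ : ℝ} (hθ : 0 < θ + κ ^ 2) :
    HasDerivAt (fun s => shiftedHeatKernel κ y s)
      (shiftedHeatKernel κ y θ *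
        (y ^ 2 / (4 * (θ + κ ^ 2) ^ 2) - 1 / (2 * (θ + κ ^ 2)))) θ := by
  have h1 : HasDerivAt (fun s : ℝ => s + κ ^ 2) 1 θ := (hasDerivAt_id' θ).add_const _
  have h : HasDerivAt (fun s : ℝ => log κ - log (s + κ ^ 2) / 2 - y ^ 2 / (4 * (s + κ ^ 2)))
      (y ^ 2 / (4 * (θ + κ ^ 2) ^ 2) - 1 / (2 * (θ + κ ^ 2))) θ := by
    refine ((((h1.log hθ.ne').div_const 2).const_sub (log κ)).sub
      (((h1.const_mul 4).fun_inv (by positivity)).const_mul (y ^ 2))).congr_deriv ?_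
    field_simp; ring
  exact h.exp

theorem exp_neg_one_le_shiftedHeatKernel {κ y θ : ℝ} (hκ : 0 < κ) (hθ : 0 ≤ θ)
    (hθκ : θ ≤ κ ^ 2) (hy : y ^ 2 ≤ κ ^ 2) : exp (-1) ≤ shiftedHeatKernel κ y θ := by
  have hκ2 : 0 < κ ^ 2 := by positivity
  have h1 : log (θ + κ ^ 2) ≤ log 2 + 2 * log κ := by
    calc log (θ + κ ^ 2) ≤ log (2 * κ ^ 2) := log_le_log (by positivity) (by linarith)
      _ = log 2 + 2 * log κ := by rw [log_mul (by norm_num) (by positivity), log_pow]; norm_num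
  have h2 : y ^ 2 / (4 * (θ + κ ^ 2)) ≤ 1 / 4 := by
    rw [div_le_div_iff₀ (by positivity) (by norm_num)]; linarith
  have h3 := log_two_lt_d9
  exact exp_le_exp.2 (by linarith)

theorem shiftedHeatKernel_le {κ y θ : ℝ} (hκ : 0 < κ) (hθ : 0 < θ) :
    shiftedHeatKernel κ y θ ≤ κ * exp (-(log θ / 2)) := by
  have h1 : log θ ≤ log (θ + κ ^ 2) := log_le_log hθ (by nlinarith)
  have h2 : 0 ≤ y ^ 2 / (4 * (θ + κ ^ 2)) := by positivity
  calc shiftedHeatKernel κ y θ ≤ exp (log κ + -(log θ / 2)) := exp_le_exp.2 (by linarith)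
    _ = _ := by rw [exp_add, exp_log hκ]

/-- Near the side `x = 0` of a rectangle, a bounded heat subsolution that is jointly continuous off
the closed set of times `N` on that side, and Lipschitz from the side at the times of `N`, stays
below its boundary values up to a multiple of the distance to the side. -/
theorem HeatSubsolutionAt.le_near_side {u : ℝ → ℝ → ℝ} {d t₁ t₂ B C c k n : ℝ} {N : Set ℝ}
    (hd : 0 < d) (hC : 0 ≤ C) (hN : IsClosed N)
    (hinside : ∀ x ∈ Ioo 0 d, ∀ t ∈ Icc t₁ t₂, ContinuousAt (fun q : ℝ × ℝ => u q.1 q.2) (x, t))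
    (hside : ∀ t ∈ Icc t₁ t₂, t ∉ N → ContinuousAt (fun q : ℝ × ℝ => u q.1 q.2) (0, t))
    (hlip : ∀ t ∈ Icc t₁ t₂, t ∈ N → ∀ x ∈ Ioo 0 d, u x t ≤ u 0 t + n * x)
    (hzero : ∀ t ∈ Icc t₁ t₂, u 0 t ≤ c)
    (hbot : ∀ x ∈ Ioo 0 d, u x t₁ ≤ c + k * x)
    (hB : ∀ x ∈ Ioo 0 d, ∀ t ∈ Icc t₁ t₂, |u x t| ≤ B)
    (hpde : ∀ x ∈ Ioo 0 d, ∀ t ∈ Ioc t₁ t₂, HeatSubsolutionAt u C x t) :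
    ∃ K, ∀ x ∈ Ioo 0 d, ∀ t ∈ Icc t₁ t₂, u x t ≤ c + K * x + (C + 1) * (t - t₁) := by
  rcases lt_or_ge t₂ t₁ with h21 | h12
  · exact ⟨0, fun x _ t ht => absurd (ht.1.trans ht.2) (not_le.2 h21)⟩
  have hB0 : 0 ≤ B :=
    (abs_nonneg _).trans (hB (d / 2) ⟨by linarith, by linarith⟩ t₁ ⟨le_rfl, h12⟩)
  have hBc : 0 ≤ B + |c| := by positivity
  set K := |n| + |k| + 2 * (B + |c|) / d with hK
  have hKn : n ≤ K := by
    have : 0 ≤ 2 * (B + |c|) / d := by positivity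
    linarith [le_abs_self n, abs_nonneg k]
  have hKk : k ≤ K := by
    have : 0 ≤ 2 * (B + |c|) / d := by positivity
    linarith [le_abs_self k, abs_nonneg n]
  have hK0 : 0 ≤ K := by positivity
  have hKfar : ∀ x, d / 2 ≤ x → B ≤ c + K * x := by
    intro x hx
    have h1 : 2 * (B + |c|) / d * (d / 2) = B + |c| := by field_simp
    have h2 : 2 * (B + |c|) / d * (d / 2) ≤ K * x := by
      gcongr
      linarith [abs_nonneg n, abs_nonneg k]
    linarith [neg_abs_le c]
  refine ⟨K, fun x hx s hs => ?_⟩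
  have hts : 0 ≤ (C + 1) * (s - t₁) := mul_nonneg (by linarith) (by linarith [hs.1])
  rcases le_or_gt (d / 2) x with hxd | hxd
  · linarith [hKfar x hxd, le_abs_self (u x s), hB x hx s hs]
  obtain ⟨α, ⟨hαN, hα⟩, hαmax⟩ :=
    ((isCompact_Icc (a := t₁) (b := s)).inter_left (isClosed_singleton.union hN)).exists_isGreatest
      ⟨t₁, Or.inl rfl, le_rfl, hs.1⟩
  have hαI : α ∈ Icc t₁ t₂ := ⟨hα.1, hα.2.trans hs.2⟩
  have hαbot : ∀ y ∈ Ioo 0 d, u y α ≤ c + K * y := by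
    intro y hy
    rcases hαN with h | h
    · rw [mem_singleton_iff.1 h]
      nlinarith [hbot y hy, hy.1]
    · nlinarith [hlip α hαI h y hy, hzero α hαI, hy.1]
  have hαN' : ∀ t ∈ Ioc α s, t ∉ N := fun t ht htN =>
    absurd (hαmax ⟨Or.inr htN, hα.1.trans ht.1.le, ht.2⟩) (not_le.2 ht.1)
  rcases hα.2.eq_or_lt with rfl | hαs
  · linarith [hαbot x hx]
  refine le_of_forall_pos_le_add fun ε' hε' => ?_
  obtain ⟨ε, hε, hεε'⟩ : ∃ ε > 0, ε' = 2 * ε := ⟨ε' / 2, by linarith, by ring⟩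
  set A := exp 1 * (B + |c|) with hA
  have hA0 : 0 ≤ A := by positivity
  set E := exp (-(log (s - α) / 2)) with hE
  have hE0 : 0 < E := exp_pos _
  obtain ⟨κ, hκ, hκd, hκε⟩ : ∃ κ > 0, κ < d / 2 ∧ A * (κ * E) ≤ ε := by
    refine ⟨min (d / 4) (ε / (A * E + 1)), lt_min (by linarith) (by positivity),
      (min_le_left _ _).trans_lt (by linarith), ?_⟩
    calc A * (min (d / 4) (ε / (A * E + 1)) * E) ≤ A * (ε / (A * E + 1) * E) := by
          gcongr; exact min_le_right _ _
      _ = ε * (A * E / (A * E + 1)) := by ring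
      _ ≤ ε * 1 := by
          gcongr
          rw [div_le_one (by positivity)]; linarith
      _ = ε := mul_one _
  obtain ⟨σ, hσ, hσκ, hσs, hσu⟩ : ∃ σ > 0, σ ≤ κ ^ 2 ∧ α + σ ≤ s ∧
      ∀ y ∈ Icc κ (d / 2), u y (α + σ) ≤ u y α + ε := by
    have hcomp : IsCompact (Icc κ (d / 2) ×ˢ Icc α s) := isCompact_Icc.prod isCompact_Icc
    have hco : ContinuousOn (fun q : ℝ × ℝ => u q.1 q.2) (Icc κ (d / 2) ×ˢ Icc α s) := by
      rintro ⟨y, t⟩ ⟨hy, ht⟩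
      exact (hinside y ⟨hκ.trans_le hy.1, hy.2.trans_lt (by linarith)⟩ t
        ⟨hα.1.trans ht.1, ht.2.trans hs.2⟩).continuousWithinAt
    obtain ⟨δ, hδ, hδu⟩ := Metric.uniformContinuousOn_iff.1
      (hcomp.uniformContinuousOn_of_continuous hco) ε hε
    have hκ2 : 0 < κ ^ 2 := by positivity
    refine ⟨min (δ / 2) (min (κ ^ 2) (s - α)), lt_min (by linarith)
      (lt_min hκ2 (by linarith)), (min_le_right _ _).trans (min_le_left _ _), ?_, ?_⟩
    · linarith [(min_le_right (δ / 2) _).trans (min_le_right (κ ^ 2) (s - α))]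
    · intro y hy
      set σ := min (δ / 2) (min (κ ^ 2) (s - α)) with hσ
      have h0 : 0 < σ := lt_min (by linarith) (lt_min hκ2 (by linarith))
      have h1 : σ ≤ s - α := (min_le_right (δ / 2) _).trans (min_le_right (κ ^ 2) (s - α))
      have h2 : σ ≤ δ / 2 := min_le_left _ _
      have := hδu (y, α + σ) ⟨hy, by constructor <;> dsimp only <;> linarith⟩
        (y, α) ⟨hy, le_rfl, hαs.le⟩
        (by rw [Prod.dist_eq, dist_self, Real.dist_eq, add_sub_cancel_left, abs_of_pos h0]
            exact max_lt hδ (by linarith))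
      rw [Real.dist_eq] at this
      linarith [(abs_lt.1 this).2]
  have hkey := le_of_heat_comparison (x₁ := 0) (x₂ := d / 2) (t₁ := α + σ) (t₂ := s) (u := u)
    (ψ := fun y t => c + ε + K * y + (C + 1) * (t - α) + A * shiftedHeatKernel κ y (t - α))
    (ψx := fun y t => K + A * (shiftedHeatKernel κ y (t - α) * (-y / (2 * (t - α + κ ^ 2)))))
    (ψxx := fun y t => A * (shiftedHeatKernel κ y (t - α) *
        (y ^ 2 / (4 * (t - α + κ ^ 2) ^ 2) - 1 / (2 * (t - α + κ ^ 2)))))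
    (ψt := fun y t => (C + 1) + A * (shiftedHeatKernel κ y (t - α) *
        (y ^ 2 / (4 * (t - α + κ ^ 2) ^ 2) - 1 / (2 * (t - α + κ ^ 2)))))
    (C := C) ?_ ?_ ?_ ?_ ?_ ?_ ?_ ?_ ?_ x ⟨hx.1.le, hxd.le⟩ s ⟨hσs, le_rfl⟩
  · have h1 : A * shiftedHeatKernel κ x (s - α) ≤ ε :=
      (mul_le_mul_of_nonneg_left (shiftedHeatKernel_le hκ (by linarith)) hA0).trans hκε
    have h2 : (C + 1) * (s - α) ≤ (C + 1) * (s - t₁) := by gcongr; exact hα.1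
    linarith
  · refine ContinuousOn.sub ?_ ?_
    · rintro ⟨y, t⟩ ⟨hy, ht⟩
      dsimp only at hy ht
      refine ContinuousAt.continuousWithinAt ?_
      have htI : t ∈ Icc t₁ t₂ := ⟨by linarith [ht.1, hα.1], ht.2.trans hs.2⟩
      rcases hy.1.eq_or_lt with rfl | h0
      · exact hside t htI (hαN' t ⟨by linarith [ht.1], ht.2⟩)
      · exact hinside y ⟨h0, by linarith [hy.2]⟩ t htI
    · unfold shiftedHeatKernel
      have hpos : ∀ q ∈ Icc 0 (d / 2) ×ˢ Icc (α + σ) s, q.2 - α + κ ^ 2 ≠ 0 := by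
        rintro ⟨y, t⟩ ⟨-, ht⟩
        have := ht.1
        dsimp only at this ⊢
        nlinarith
      have hpos' : ∀ q ∈ Icc 0 (d / 2) ×ˢ Icc (α + σ) s, 4 * (q.2 - α + κ ^ 2) ≠ 0 :=
        fun q hq => mul_ne_zero four_ne_zero (hpos q hq)
      fun_prop (disch := assumption)
  · intro y hy
    have hH : 0 ≤ A * shiftedHeatKernel κ y (α + σ - α) := mul_nonneg hA0 (exp_pos _).le
    have hCσ : 0 ≤ (C + 1) * (α + σ - α) := mul_nonneg (by linarith) (by linarith)
    rcases le_or_gt κ y with hκy | hκy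
    · linarith [hσu y ⟨hκy, hy.2⟩, hαbot y ⟨hκ.trans_le hκy, by linarith [hy.2]⟩]
    · have hH1 : B + |c| ≤ A * shiftedHeatKernel κ y (α + σ - α) := by
        calc B + |c| = A * exp (-1) := by
              rw [hA, mul_right_comm, ← exp_add]; simp
          _ ≤ _ := by
              gcongr
              exact exp_neg_one_le_shiftedHeatKernel hκ (by linarith) (by linarith)
                (by have := hy.1; gcongr)
      have hKy : 0 ≤ K * y := mul_nonneg hK0 hy.1
      have huc : u y (α + σ) ≤ B + |c| + c := by
        rcases hy.1.eq_or_lt with rfl | h0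
        · linarith [hzero (α + σ) ⟨by linarith [hα.1], hσs.trans hs.2⟩]
        · linarith [le_abs_self (u y (α + σ)), neg_abs_le c,
            hB y ⟨h0, by linarith [hy.2]⟩ (α + σ) ⟨by linarith [hα.1], hσs.trans hs.2⟩]
      linarith
  · intro t ht
    have hH : 0 ≤ A * shiftedHeatKernel κ 0 (t - α) := mul_nonneg hA0 (exp_pos _).le
    have hCσ : 0 ≤ (C + 1) * (t - α) := mul_nonneg (by linarith) (by linarith [ht.1])
    linarith [hzero t ⟨by linarith [ht.1, hα.1], ht.2.trans hs.2⟩]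
  · intro t ht
    have hH : 0 ≤ A * shiftedHeatKernel κ (d / 2) (t - α) := mul_nonneg hA0 (exp_pos _).le
    have hCσ : 0 ≤ (C + 1) * (t - α) := mul_nonneg (by linarith) (by linarith [ht.1])
    linarith [hKfar (d / 2) le_rfl, le_abs_self (u (d / 2) t),
      hB (d / 2) ⟨by linarith, by linarith⟩ t ⟨by linarith [ht.1, hα.1], ht.2.trans hs.2⟩]
  · intro y hy t ht
    refine (((((hasDerivAt_id' y).const_mul K).const_add (c + ε)).add_const _).add
      (hasDerivAt_shiftedHeatKernel_space.const_mul A)).congr_deriv ?_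
    ring
  · intro y hy t ht
    exact (hasDerivAt_shiftedHeatKernel_space_space.const_mul A).const_add K
  · intro y hy t ht
    have hpos : 0 < t - α + κ ^ 2 := by nlinarith [ht.1]
    have h1 : HasDerivAt (fun r : ℝ => r - α) 1 t := (hasDerivAt_id' t).sub_const α
    have h2 := (hasDerivAt_shiftedHeatKernel_time (y := y) hpos).comp t h1
    refine (((h1.const_mul (C + 1)).const_add (c + ε + K * y)).add (h2.const_mul A)).congr_deriv ?_
    ring
  · intro y hy t ht
    linarith
  · intro y hy t ht _
    exact hpde y ⟨hy.1, by linarith [hy.2]⟩ t ⟨by linarith [ht.1, hα.1], ht.2.trans hs.2⟩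

theorem HeatSubsolutionAt.comp_reflect {v : ℝ → ℝ → ℝ} {C z σ x t : ℝ} (hσ : σ * σ = 1)
    (h : HeatSubsolutionAt v C (z + σ * x) t) :
    HeatSubsolutionAt (fun y s => v (z + σ * y) s) C x t := by
  obtain ⟨hC2, g, hg, hle⟩ := h
  refine ⟨ContDiffAt.comp x (g := fun y => v y t) (f := fun y => z + σ * y) hC2 (by fun_prop),
    g, hg, ?_⟩
  have hderiv : ∀ (f : ℝ → ℝ) (y : ℝ), deriv (fun y => f (z + σ * y)) y = σ * deriv f (z + σ * y) := by
    intro f y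
    have := deriv_comp_mul_left σ (fun y => f (z + y)) y
    rw [this, deriv_comp_const_add, smul_eq_mul]
  have h1 : (deriv fun y => v (z + σ * y) t) = fun y => σ * deriv (fun y => v y t) (z + σ * y) :=
    funext (hderiv fun y => v y t)
  rw [h1, deriv_const_mul_field, hderiv, ← mul_assoc, hσ, one_mul]
  exact hle

/-- Maximum principle with affine boundary values on a rectangle on whose vertical sides joint
continuity may fail, at the points of a closed set `F`. -/
theorem HeatSubsolutionAt.le_affine {v : ℝ → ℝ → ℝ} {z₁ z₂ t₁ t₂ B C c k n : ℝ}
    {F : Set (ℝ × ℝ)} (hC : 0 ≤ C) (hF : IsClosed F)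
    (hinside : ∀ x ∈ Ioo z₁ z₂, ∀ t ∈ Icc t₁ t₂, ContinuousAt (fun q : ℝ × ℝ => v q.1 q.2) (x, t))
    (hside : ∀ z ∈ ({z₁, z₂} : Set ℝ), ∀ t ∈ Icc t₁ t₂, (z, t) ∉ F →
      ContinuousAt (fun q : ℝ × ℝ => v q.1 q.2) (z, t))
    (hlip : ∀ z ∈ ({z₁, z₂} : Set ℝ), ∀ t ∈ Icc t₁ t₂, (z, t) ∈ F →
      ∀ x ∈ Ioo z₁ z₂, v x t ≤ v z t + n * |x - z|)
    (hsidele : ∀ z ∈ ({z₁, z₂} : Set ℝ), ∀ t ∈ Icc t₁ t₂, v z t ≤ c + k * z)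
    (hbot : ∀ x ∈ Ioo z₁ z₂, v x t₁ ≤ c + k * x)
    (hB : ∀ x ∈ Ioo z₁ z₂, ∀ t ∈ Icc t₁ t₂, |v x t| ≤ B)
    (hpde : ∀ x ∈ Ioo z₁ z₂, ∀ t ∈ Ioc t₁ t₂, HeatSubsolutionAt v C x t) :
    ∀ x ∈ Ioo z₁ z₂, ∀ t ∈ Icc t₁ t₂, v x t ≤ c + k * x + (C + 1) * (t - t₁) := by
  intro x hx t ht
  have hz : z₁ < z₂ := hx.1.trans hx.2
  have hnear : ∀ z σ : ℝ, z ∈ ({z₁, z₂} : Set ℝ) → σ * σ = 1 → |σ| = 1 →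
      (∀ y ∈ Ioo 0 (z₂ - z₁), z + σ * y ∈ Ioo z₁ z₂) →
      ∃ K, ∀ y ∈ Ioo 0 (z₂ - z₁), ∀ t ∈ Icc t₁ t₂,
        v (z + σ * y) t ≤ c + k * z + K * y + (C + 1) * (t - t₁) := by
    intro z σ hzz hσ hσ' hmem
    refine HeatSubsolutionAt.le_near_side (u := fun y s => v (z + σ * y) s) (B := B)
      (k := k * σ) (n := n)
      (N := (fun s => (z, s)) ⁻¹' F) (by linarith) hC (hF.preimage (by fun_prop)) ?_ ?_ ?_ ?_ ?_ ?_ ?_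
    · intro y hy s hs
      exact ContinuousAt.comp (g := fun q : ℝ × ℝ => v q.1 q.2)
        (f := fun q : ℝ × ℝ => (z + σ * q.1, q.2)) (hinside _ (hmem y hy) s hs) (by fun_prop)
    · intro s hs hsF
      refine ContinuousAt.comp (g := fun q : ℝ × ℝ => v q.1 q.2)
        (f := fun q : ℝ × ℝ => (z + σ * q.1, q.2)) ?_ (by fun_prop)
      simpa using hside z hzz s hs hsF
    · intro s hs hsF y hy
      have := hlip z hzz s hs hsF _ (hmem y hy)
      rw [add_sub_cancel_left, abs_mul, hσ', one_mul, abs_of_pos hy.1] at this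
      simpa using this
    · intro s hs
      simpa using hsidele z hzz s hs
    · intro y hy
      linarith [hbot _ (hmem y hy)]
    · exact fun y hy s hs => hB _ (hmem y hy) s hs
    · exact fun y hy s hs => (hpde _ (hmem y hy) s hs).comp_reflect hσ
  obtain ⟨K₁, hK₁⟩ := hnear z₁ 1 (by simp) (by norm_num) (by norm_num)
    fun y hy => ⟨by linarith [hy.1], by linarith [hy.2]⟩
  obtain ⟨K₂, hK₂⟩ := hnear z₂ (-1) (by simp) (by norm_num) (by norm_num)
    fun y hy => ⟨by linarith [hy.2], by linarith [hy.1]⟩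
  refine le_of_forall_pos_le_add fun ε hε => ?_
  set L := |K₁| + |K₂| + |k| + 1 with hL
  have hL0 : 0 < L := by positivity
  obtain ⟨δ, hδ, hδ1, hδ2, hδL⟩ : ∃ δ > 0, δ ≤ x - z₁ ∧ δ ≤ z₂ - x ∧ L * δ ≤ ε := by
    refine ⟨min (ε / L) (min (x - z₁) (z₂ - x)), lt_min (by positivity)
      (lt_min (by linarith [hx.1]) (by linarith [hx.2])),
      (min_le_right _ _).trans (min_le_left _ _), (min_le_right _ _).trans (min_le_right _ _), ?_⟩
    calc L * min (ε / L) (min (x - z₁) (z₂ - x)) ≤ L * (ε / L) := by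
          gcongr; exact min_le_left _ _
      _ = ε := by field_simp
  have hδI : δ ∈ Ioo 0 (z₂ - z₁) := ⟨hδ, by linarith⟩
  have h := le_of_heat_comparison (x₁ := z₁ + δ) (x₂ := z₂ - δ) (t₁ := t₁) (t₂ := t₂) (u := v)
    (ψ := fun y s => c + ε + k * y + (C + 1) * (s - t₁)) (ψx := fun _ _ => k)
    (ψxx := fun _ _ => 0) (ψt := fun _ _ => C + 1) (C := C) ?_ ?_ ?_ ?_ ?_ ?_ ?_ ?_ ?_
    x ⟨by linarith, by linarith⟩ t ht
  · linarith
  · refine ContinuousOn.sub ?_ (by fun_prop)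
    rintro ⟨y, s⟩ ⟨hy, hs⟩
    exact (hinside y ⟨by linarith [hy.1], by linarith [hy.2]⟩ s hs).continuousWithinAt
  · intro y hy
    linarith [hbot y ⟨by linarith [hy.1], by linarith [hy.2]⟩]
  · intro s hs
    have h1 := hK₁ δ hδI s hs
    rw [one_mul] at h1
    have h2 : (K₁ - k) * δ ≤ L * δ := by
      gcongr; linarith [le_abs_self K₁, neg_abs_le k, abs_nonneg K₂]
    linarith
  · intro s hs
    have h1 := hK₂ δ hδI s hs
    rw [neg_one_mul, ← sub_eq_add_neg] at h1
    have h2 : (K₂ + k) * δ ≤ L * δ := by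
      gcongr; linarith [le_abs_self K₂, le_abs_self k, abs_nonneg K₁]
    linarith
  · intro y _ s _
    refine ((((hasDerivAt_id' y).const_mul k).const_add (c + ε)).add_const _).congr_deriv ?_
    ring
  · exact fun y _ s _ => hasDerivAt_const _ _
  · intro y _ s _
    refine ((((hasDerivAt_id' s).sub_const t₁).const_mul (C + 1)).const_add _).congr_deriv ?_
    ring
  · intro y _ s _
    linarith
  · intro y hy s hs _
    exact hpde y ⟨by linarith [hy.1], by linarith [hy.2]⟩ s hs

theorem HeatSubsolutionAt.eventually_le {v : ℝ → ℝ → ℝ} {x₀ t₀ ρ B C n : ℝ} {F : Set (ℝ × ℝ)}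
    (hρ : 0 < ρ) (hC : 0 ≤ C) (hn : 0 ≤ n) (hF : IsClosed F) (h₀ : (x₀, t₀) ∈ F)
    (hcont : ∀ x ∈ Icc (x₀ - ρ) (x₀ + ρ), ∀ t ∈ Icc (t₀ - ρ) (t₀ + ρ), (x, t) ∉ F →
      ContinuousAt (fun q : ℝ × ℝ => v q.1 q.2) (x, t))
    (hlip : ∀ x ∈ Icc (x₀ - ρ) (x₀ + ρ), ∀ t ∈ Icc (t₀ - ρ) (t₀ + ρ), (x, t) ∈ F →
      ∀ y ∈ Icc (x₀ - ρ) (x₀ + ρ), ∀ s ∈ Icc (t₀ - ρ) (t₀ + ρ),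
        |v y t - v x s| ≤ n * (|y - x| + |s - t|))
    (hB : ∀ x ∈ Icc (x₀ - ρ) (x₀ + ρ), ∀ t ∈ Icc (t₀ - ρ) (t₀ + ρ), |v x t| ≤ B)
    (hpde : ∀ x ∈ Icc (x₀ - ρ) (x₀ + ρ), ∀ t ∈ Icc (t₀ - ρ) (t₀ + ρ), HeatSubsolutionAt v C x t)
    {ε : ℝ} (hε : 0 < ε) :
    ∀ᶠ q : ℝ × ℝ in 𝓝 (x₀, t₀), v q.1 q.2 ≤ v x₀ t₀ + ε := by
  have hx₀ : x₀ ∈ Icc (x₀ - ρ) (x₀ + ρ) := ⟨by linarith, by linarith⟩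
  have ht₀ : t₀ ∈ Icc (t₀ - ρ) (t₀ + ρ) := ⟨by linarith, by linarith⟩
  have hB0 : 0 ≤ B := (abs_nonneg _).trans (hB x₀ hx₀ t₀ ht₀)
  have hvert : ∀ x ∈ Icc (x₀ - ρ) (x₀ + ρ), ∀ t ∈ Icc (t₀ - ρ) (t₀ + ρ), (x, t) ∈ F →
      ∀ s ∈ Icc (t₀ - ρ) (t₀ + ρ), |v x t - v x s| ≤ n * |s - t| := by
    intro x hx t ht hxt s hs
    simpa using hlip x hx t ht hxt x hx s hs
  obtain ⟨τ, hτ, hτρ, hτε⟩ : ∃ τ > 0, τ ≤ ρ ∧ (n + C + 1) * τ ≤ ε / 16 := by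
    refine ⟨min ρ (ε / 16 / (n + C + 1)), lt_min hρ (by positivity), min_le_left _ _, ?_⟩
    calc (n + C + 1) * min ρ (ε / 16 / (n + C + 1)) ≤ (n + C + 1) * (ε / 16 / (n + C + 1)) := by
          gcongr; exact min_le_right _ _
      _ = ε / 16 := by field_simp
  have hnτ : 0 ≤ n * τ := by positivity
  have hCτ : 0 ≤ C * τ := by positivity
  set t₁ := t₀ - τ with ht₁
  set t₂ := t₀ + τ with ht₂
  have htsub : ∀ t ∈ Icc t₁ t₂, t ∈ Icc (t₀ - ρ) (t₀ + ρ) :=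
    fun t ht => ⟨by linarith [ht.1], by linarith [ht.2]⟩
  have ht₁I : t₁ ∈ Icc t₁ t₂ := ⟨le_rfl, by linarith⟩
  obtain ⟨δ, hδ, hδρ, hδv⟩ : ∃ δ > 0, δ ≤ ρ ∧
      ∀ x ∈ Icc (x₀ - δ) (x₀ + δ), v x t₁ ≤ v x₀ t₁ + ε / 8 := by
    have hc : ContinuousAt (fun x => v x t₁) x₀ := (hpde x₀ hx₀ t₁ (htsub _ ht₁I)).1.continuousAt
    obtain ⟨δ, hδ, h⟩ := Metric.continuousAt_iff.1 hc (ε / 8) (by linarith)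
    refine ⟨min ρ (δ / 2), lt_min hρ (by linarith), min_le_left _ _, fun x hx => ?_⟩
    have hm : min ρ (δ / 2) ≤ δ / 2 := min_le_right _ _
    have h1 : dist x x₀ < δ := by
      rw [Real.dist_eq, abs_lt]; constructor <;> linarith [hx.1, hx.2]
    have h2 := h h1
    rw [Real.dist_eq] at h2
    linarith [(abs_lt.1 h2).2]
  have hxsub : ∀ x ∈ Icc (x₀ - δ) (x₀ + δ), x ∈ Icc (x₀ - ρ) (x₀ + ρ) :=
    fun x hx => ⟨by linarith [hx.1], by linarith [hx.2]⟩
  set m := v x₀ t₀ + 5 * (n * τ) + ε / 8 with hm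
  have hmB : B ≤ m + 2 * B := by linarith [neg_abs_le (v x₀ t₀), hB x₀ hx₀ t₀ ht₀]
  have hbot : ∀ x ∈ Icc (x₀ - δ) (x₀ + δ), v x t₁ + 4 * (n * τ) ≤ m := by
    intro x hx
    have h1 := (abs_le.1 (hvert x₀ hx₀ t₀ ht₀ h₀ t₁ (htsub _ ht₁I))).1
    rw [show t₁ - t₀ = -τ by rw [ht₁]; ring, abs_neg, abs_of_pos hτ] at h1
    linarith [hδv x hx]
  have hcol : ∀ z ∈ Icc (x₀ - δ) (x₀ + δ), ∀ t ∈ Icc t₁ t₂, (z, t) ∈ F →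
      ∀ s ∈ Icc t₁ t₂, v z s ≤ m := by
    intro z hz t ht hzt s hs
    have hdist : ∀ r ∈ Icc t₁ t₂, n * |r - t| ≤ 2 * (n * τ) := by
      intro r hr
      have : |r - t| ≤ 2 * τ := by
        rw [abs_le]; constructor <;> linarith [hr.1, hr.2, ht.1, ht.2]
      nlinarith
    have h1 := abs_le.1 (hvert z (hxsub z hz) t (htsub t ht) hzt s (htsub s hs))
    have h2 := abs_le.1 (hvert z (hxsub z hz) t (htsub t ht) hzt t₁ (htsub _ ht₁I))
    linarith [hdist s hs, hdist t₁ ht₁I, hbot z hz]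
  set k := 2 * B / δ with hk
  have hk0 : 0 ≤ k := by positivity
  have hkδ : k * δ = 2 * B := by rw [hk]; field_simp
  obtain ⟨δ', hδ', hδ'δ, hδ'k⟩ : ∃ δ' > 0, δ' ≤ δ ∧ k * δ' ≤ ε / 8 := by
    refine ⟨min δ (ε / 8 / (k + 1)), lt_min hδ (by positivity), min_le_left _ _, ?_⟩
    calc k * min δ (ε / 8 / (k + 1)) ≤ (k + 1) * (ε / 8 / (k + 1)) := by
          gcongr
          · linarith
          · exact min_le_right _ _
      _ = ε / 8 := by field_simp
  have hnhds : Ioo (x₀ - δ') (x₀ + δ') ×ˢ Ioo t₁ t₂ ∈ 𝓝 (x₀, t₀) :=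
    prod_mem_nhds (Ioo_mem_nhds (by linarith) (by linarith))
      (Ioo_mem_nhds (by linarith) (by linarith))
  filter_upwards [hnhds]
  rintro ⟨y, s⟩ ⟨hy, hs⟩
  dsimp only at hy hs ⊢
  have hsI : s ∈ Icc t₁ t₂ := ⟨hs.1.le, hs.2.le⟩
  have hyI : y ∈ Icc (x₀ - δ) (x₀ + δ) := ⟨by linarith [hy.1], by linarith [hy.2]⟩
  set P : Set ℝ := Prod.fst '' (F ∩ Icc (x₀ - δ) (x₀ + δ) ×ˢ Icc t₁ t₂) with hP
  have hPmem : ∀ z ∈ Icc (x₀ - δ) (x₀ + δ), ∀ t ∈ Icc t₁ t₂, (z, t) ∈ F → z ∈ P :=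
    fun z hz t ht hzt => ⟨(z, t), ⟨hzt, hz, ht⟩, rfl⟩
  have hPle : ∀ z ∈ P, ∀ s ∈ Icc t₁ t₂, v z s ≤ m := by
    rintro z ⟨⟨z', t⟩, ⟨hzt, hz, ht⟩, rfl⟩ s hs
    exact hcol z' hz t ht hzt s hs
  by_cases hyP : y ∈ P
  · linarith [hPle y hyP s hsI]
  set Q : Set ℝ := P ∪ {x₀ - δ, x₀ + δ} with hQ
  have hQc : IsCompact Q :=
    (((isCompact_Icc.prod isCompact_Icc).inter_left hF).image continuous_fst).union
      (Set.toFinite _).isCompact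
  have hQsub : ∀ z ∈ Q, z ∈ Icc (x₀ - δ) (x₀ + δ) := by
    rintro z (⟨⟨z', t⟩, ⟨-, hz, -⟩, rfl⟩ | rfl | rfl)
    · exact hz
    · exact ⟨le_rfl, by linarith⟩
    · exact ⟨by linarith, le_rfl⟩
  have hQle : ∀ z ∈ Q, ∀ s ∈ Icc t₁ t₂, v z s ≤ m + k * |z - x₀| := by
    intro z hz s hs
    rcases hz with hz | hz
    · linarith [hPle z hz s hs, mul_nonneg hk0 (abs_nonneg (z - x₀))]
    · have hzI := hQsub z (Or.inr hz)
      have h1 : |z - x₀| = δ := by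
        rcases hz with rfl | rfl
        · rw [sub_sub_cancel_left, abs_neg, abs_of_pos hδ]
        · rw [add_sub_cancel_left, abs_of_pos hδ]
      rw [h1, hkδ]
      linarith [le_abs_self (v z s), hB z (hxsub z hzI) s (htsub s hs)]
  have hyQ : y ∉ Q := by
    rintro (h | h | h)
    · exact hyP h
    · linarith [hy.1]
    · rw [mem_singleton_iff] at h; linarith [hy.2]
  obtain ⟨z₁, ⟨hz₁Q, hz₁y⟩, hz₁max⟩ := (hQc.inter_right isClosed_Iic).exists_isGreatest
    ⟨x₀ - δ, Or.inr (Or.inl rfl), (by exact hyI.1 : x₀ - δ ∈ Iic y)⟩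
  obtain ⟨z₂, ⟨hz₂Q, hz₂y⟩, hz₂min⟩ := (hQc.inter_right isClosed_Ici).exists_isLeast
    ⟨x₀ + δ, Or.inr (Or.inr rfl), (by exact hyI.2 : x₀ + δ ∈ Ici y)⟩
  have hz₁y : z₁ < y := lt_of_le_of_ne hz₁y fun h => hyQ (h ▸ hz₁Q)
  have hz₂y : y < z₂ := lt_of_le_of_ne hz₂y fun h => hyQ (h ▸ hz₂Q)
  have hfree : ∀ x ∈ Ioo z₁ z₂, x ∉ Q := by
    intro x hx hxQ
    rcases le_total x y with h | h
    · exact absurd (hz₁max ⟨hxQ, h⟩) (not_le.2 hx.1)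
    · exact absurd (hz₂min ⟨hxQ, h⟩) (not_le.2 hx.2)
  have hIsub : ∀ x ∈ Icc z₁ z₂, x ∈ Icc (x₀ - δ) (x₀ + δ) := fun x hx =>
    ⟨(hQsub _ hz₁Q).1.trans hx.1, hx.2.trans (hQsub _ hz₂Q).2⟩
  have hzI : ∀ z ∈ ({z₁, z₂} : Set ℝ), z ∈ Q ∧ z ∈ Icc z₁ z₂ := by
    rintro z (rfl | rfl)
    · exact ⟨hz₁Q, le_rfl, by linarith⟩
    · exact ⟨hz₂Q, by linarith, le_rfl⟩
  have hx₀Q : x₀ ∈ Q :=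
    Or.inl (hPmem x₀ ⟨by linarith, by linarith⟩ t₀ ⟨by linarith, by linarith⟩ h₀)
  obtain ⟨σ, hσ⟩ : ∃ σ : ℝ, ∀ x ∈ Icc z₁ z₂, |x - x₀| = σ * (x - x₀) := by
    have hx₀n : x₀ ∉ Ioo z₁ z₂ := fun h => hfree x₀ h hx₀Q
    rcases le_or_gt x₀ z₁ with h | h
    · exact ⟨1, fun x hx => by rw [abs_of_nonneg (by linarith [hx.1])]; ring⟩
    · have h2 : z₂ ≤ x₀ := by
        by_contra! h2
        exact hx₀n ⟨h, h2⟩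
      exact ⟨-1, fun x hx => by rw [abs_of_nonpos (by linarith [hx.2])]; ring⟩
  have hmain := HeatSubsolutionAt.le_affine (v := v) (z₁ := z₁) (z₂ := z₂) (t₁ := t₁) (t₂ := t₂)
    (B := B) (C := C) (c := m - k * (σ * x₀)) (k := k * σ) (n := n) hC hF
    ?_ ?_ ?_ ?_ ?_ ?_ ?_ y ⟨hz₁y, hz₂y⟩ s hsI
  · have h1 := hσ y ⟨hz₁y.le, hz₂y.le⟩
    have h2 : |y - x₀| ≤ δ' := by rw [abs_le]; constructor <;> linarith [hy.1, hy.2]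
    have h3 : k * |y - x₀| ≤ ε / 8 := (mul_le_mul_of_nonneg_left h2 hk0).trans hδ'k
    have h4 : (C + 1) * (s - t₁) ≤ (C + 1) * (2 * τ) := by
      gcongr; linarith [hs.2]
    rw [h1] at h3
    linarith
  · intro x hx t ht
    have hxI := hIsub x ⟨hx.1.le, hx.2.le⟩
    exact hcont x (hxsub x hxI) t (htsub t ht)
      fun h => hfree x hx (Or.inl (hPmem x hxI t ht h))
  · intro z hz t ht hzt
    exact hcont z (hxsub z (hIsub z (hzI z hz).2)) t (htsub t ht) hzt
  · intro z hz t ht hzt x hx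
    have h1 := hlip z (hxsub z (hIsub z (hzI z hz).2)) t (htsub t ht) hzt x
      (hxsub x (hIsub x ⟨hx.1.le, hx.2.le⟩)) t (htsub t ht)
    rw [sub_self, abs_zero, add_zero] at h1
    linarith [(abs_le.1 h1).2]
  · intro z hz t ht
    have h1 := hQle z (hzI z hz).1 t ht
    rw [hσ z (hzI z hz).2] at h1
    linarith
  · intro x hx
    have hxI : x ∈ Icc z₁ z₂ := ⟨hx.1.le, hx.2.le⟩
    have h1 := hσ x hxI
    have h2 := mul_nonneg hk0 (abs_nonneg (x - x₀))
    rw [h1] at h2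
    linarith [hbot x (hIsub x hxI)]
  · exact fun x hx t ht => hB x (hxsub x (hIsub x ⟨hx.1.le, hx.2.le⟩)) t (htsub t ht)
  · exact fun x hx t ht => hpde x (hxsub x (hIsub x ⟨hx.1.le, hx.2.le⟩)) t
      (htsub t ⟨ht.1.le, ht.2⟩)

/-- A bounded function that is separately regular and satisfies `|∂ₜv − ∂ₓ²v| ≤ C` pointwise is
jointly continuous. -/
theorem HeatSubsolutionAt.continuousAt {v : ℝ → ℝ → ℝ} {X₁ X₂ S₁ S₂ B C : ℝ} (hC : 0 ≤ C)
    (hB : ∀ x ∈ Ioo X₁ X₂, ∀ t ∈ Ioo S₁ S₂, |v x t| ≤ B)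
    (hpde : ∀ x ∈ Ioo X₁ X₂, ∀ t ∈ Ioo S₁ S₂, HeatSubsolutionAt v C x t)
    (hpde' : ∀ x ∈ Ioo X₁ X₂, ∀ t ∈ Ioo S₁ S₂, HeatSubsolutionAt (fun y s => -v y s) C x t) :
    ∀ x ∈ Ioo X₁ X₂, ∀ t ∈ Ioo S₁ S₂, ContinuousAt (fun q : ℝ × ℝ => v q.1 q.2) (x, t) := by
  set V : ℝ × ℝ → ℝ := fun q => v q.1 q.2 with hV
  set D : Set (ℝ × ℝ) := Ioo X₁ X₂ ×ˢ Ioo S₁ S₂ with hD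
  have hDo : IsOpen D := isOpen_Ioo.prod isOpen_Ioo
  set F : Set (ℝ × ℝ) := {p | ∀ᶠ q in 𝓝 p, ContinuousAt V q}ᶜ with hFdef
  have hF : IsClosed F := isOpen_setOfPred_eventually_nhds.isClosed_compl
  have hnF : ∀ p, p ∉ F → ContinuousAt V p := by
    intro p hp
    exact (not_not.1 hp : ∀ᶠ q in 𝓝 p, ContinuousAt V q).self_of_nhds
  suffices hempty : ¬ (D ∩ F).Nonempty by
    intro x hx t ht
    exact hnF _ fun h => hempty ⟨(x, t), ⟨hx, ht⟩, h⟩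
  intro hne
  have : LocallyCompactSpace ↥(D ∩ F) :=
    (hDo.isLocallyClosed.inter hF.isLocallyClosed).locallyCompactSpace
  have : Nonempty ↥(D ∩ F) := hne.to_subtype
  have hcx : ∀ x ∈ Ioo X₁ X₂, ∀ t ∈ Ioo S₁ S₂, ContinuousAt (fun y => v y t) x :=
    fun x hx t ht => (hpde x hx t ht).1.continuousAt
  have hct : ∀ x ∈ Ioo X₁ X₂, ∀ t ∈ Ioo S₁ S₂, ContinuousAt (fun s => v x s) t := by
    intro x hx t ht
    obtain ⟨-, g, hg, -⟩ := hpde x hx t ht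
    exact hg.continuousAt
  set A : ℕ → Set (ℝ × ℝ) := fun n => {p | ∀ y ∈ Ioo X₁ X₂, ∀ s ∈ Ioo S₁ S₂,
    (n + 1) * |y - p.1| < 1 ∧ (n + 1) * |s - p.2| < 1 →
      |v y p.2 - v p.1 s| ≤ (n + 1) * (|y - p.1| + |s - p.2|)} with hA
  have hclosed : ∀ n, IsClosed (Subtype.val ⁻¹' A n : Set ↥(D ∩ F)) := by
    intro n
    have hset : (Subtype.val ⁻¹' A n : Set ↥(D ∩ F)) =
        ⋂ y ∈ Ioo X₁ X₂, ⋂ s ∈ Ioo S₁ S₂, {p : ↥(D ∩ F) |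
          (n + 1) * |y - p.1.1| < 1 ∧ (n + 1) * |s - p.1.2| < 1 →
          |v y p.1.2 - v p.1.1 s| ≤ (n + 1) * (|y - p.1.1| + |s - p.1.2|)} := by
      ext p; simp only [hA, mem_preimage, mem_iInter, mem_ofPred_eq]
    rw [hset]
    refine isClosed_biInter fun y hy => isClosed_biInter fun s hs => isClosed_imp ?_ ?_
    · exact (isOpen_lt (f := fun p : ↥(D ∩ F) => ((n : ℝ) + 1) * |y - p.1.1|) (by fun_prop)
        continuous_const).and (isOpen_lt (f := fun p : ↥(D ∩ F) => ((n : ℝ) + 1) * |s - p.1.2|)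
        (by fun_prop) continuous_const)
    · have h1 : Continuous fun p : ↥(D ∩ F) => v y p.1.2 := continuous_iff_continuousAt.2 fun p =>
        ContinuousAt.comp (g := fun s => v y s) (f := fun p : ↥(D ∩ F) => p.1.2)
          (hct y hy _ p.2.1.2) (by fun_prop)
      have h2 : Continuous fun p : ↥(D ∩ F) => v p.1.1 s := continuous_iff_continuousAt.2 fun p =>
        ContinuousAt.comp (g := fun y => v y s) (f := fun p : ↥(D ∩ F) => p.1.1)
          (hcx _ p.2.1.1 s hs) (by fun_prop)
      exact isClosed_le (h1.sub h2).abs (by fun_prop)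
  have hunion : ⋃ n, (Subtype.val ⁻¹' A n : Set ↥(D ∩ F)) = univ := by
    refine eq_univ_of_forall fun p => ?_
    obtain ⟨⟨x, t⟩, ⟨hx, ht⟩, -⟩ := p
    dsimp only at hx ht
    obtain ⟨hC2, g, hg, -⟩ := hpde x hx t ht
    obtain ⟨L₁, hL₁⟩ := hg.isBigO_sub.bound
    obtain ⟨L₂, hL₂⟩ := (hC2.differentiableAt (by simp)).hasDerivAt.isBigO_sub.bound
    obtain ⟨δ₁, hδ₁, h1⟩ := Metric.eventually_nhds_iff.1 hL₁
    obtain ⟨δ₂, hδ₂, h2⟩ := Metric.eventually_nhds_iff.1 hL₂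
    obtain ⟨n, hn⟩ := exists_nat_ge (|L₁| + |L₂| + 1 / δ₁ + 1 / δ₂)
    have hd1 : 0 < 1 / δ₁ := by positivity
    have hd2 : 0 < 1 / δ₂ := by positivity
    have small : ∀ δ > 0, 1 / δ ≤ (n : ℝ) + 1 → ∀ r : ℝ, (n + 1) * r < 1 → r < δ := by
      intro δ hδ hδn r hr
      by_contra! hcon
      have h3 : 1 / δ * δ ≤ (n + 1) * r := by gcongr
      rw [one_div_mul_cancel hδ.ne'] at h3
      linarith
    refine mem_iUnion.2 ⟨n, ?_⟩
    intro y hy s hs hys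
    dsimp only at hys ⊢
    have e1 := @h1 s (by
      rw [Real.dist_eq]
      exact small δ₁ hδ₁ (by linarith [abs_nonneg L₁, abs_nonneg L₂]) _ hys.2)
    have e2 := @h2 y (by
      rw [Real.dist_eq]
      exact small δ₂ hδ₂ (by linarith [abs_nonneg L₁, abs_nonneg L₂]) _ hys.1)
    rw [Real.norm_eq_abs, Real.norm_eq_abs] at e1 e2
    have e3 : L₁ * |s - t| ≤ (n + 1) * |s - t| := by
      gcongr; linarith [le_abs_self L₁, abs_nonneg L₂]
    have e4 : L₂ * |y - x| ≤ (n + 1) * |y - x| := by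
      gcongr; linarith [le_abs_self L₂, abs_nonneg L₁]
    have e5 := abs_sub_le (v y t) (v x t) (v x s)
    rw [abs_sub_comm (v x t) (v x s)] at e5
    linarith
  obtain ⟨n, p, hp⟩ := nonempty_interior_of_iUnion_of_closed hclosed hunion
  rw [mem_interior_iff_mem_nhds, nhds_subtype_eq_comap, mem_comap] at hp
  obtain ⟨O, hO, hOA⟩ := hp
  refine p.2.2 ?_
  have hOD : ∀ᶠ q in 𝓝 (p : ℝ × ℝ), O ∈ 𝓝 q ∧ D ∈ 𝓝 q :=
    (eventually_eventually_nhds.2 hO).and (hDo.eventually_mem p.2.1 |>.mono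
      fun q hq => hDo.mem_nhds hq)
  filter_upwards [hOD]
  rintro ⟨x₀, t₀⟩ ⟨hqO, hqD⟩
  by_cases hqF : (x₀, t₀) ∈ F
  swap
  · exact hnF _ hqF
  obtain ⟨ρ₀, hρ₀, hball⟩ := Metric.mem_nhds_iff.1 (inter_mem hqO hqD)
  have hn : (0 : ℝ) < n + 1 := by positivity
  set ρ := min (ρ₀ / 2) (1 / (4 * ((n : ℝ) + 1))) with hρdef
  have hρ : 0 < ρ := lt_min (by linarith) (by positivity)
  have hρ1 : ρ ≤ ρ₀ / 2 := min_le_left _ _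
  have hρ2 : (n + 1) * ρ ≤ 1 / 4 := by
    calc (n + 1) * ρ ≤ (n + 1) * (1 / (4 * ((n : ℝ) + 1))) := by
          gcongr; exact min_le_right _ _
      _ = 1 / 4 := by field_simp
  have hmem : ∀ x ∈ Icc (x₀ - ρ) (x₀ + ρ), ∀ t ∈ Icc (t₀ - ρ) (t₀ + ρ), (x, t) ∈ O ∩ D := by
    intro x hx t ht
    apply hball
    rw [mem_ball, Prod.dist_eq, max_lt_iff, Real.dist_eq, Real.dist_eq, abs_lt, abs_lt]
    exact ⟨⟨by linarith [hx.1], by linarith [hx.2]⟩, by linarith [ht.1], by linarith [ht.2]⟩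
  have hx₀ : x₀ ∈ Icc (x₀ - ρ) (x₀ + ρ) := ⟨by linarith, by linarith⟩
  have ht₀ : t₀ ∈ Icc (t₀ - ρ) (t₀ + ρ) := ⟨by linarith, by linarith⟩
  have hlip : ∀ x ∈ Icc (x₀ - ρ) (x₀ + ρ), ∀ t ∈ Icc (t₀ - ρ) (t₀ + ρ), (x, t) ∈ F →
    ∀ y ∈ Icc (x₀ - ρ) (x₀ + ρ), ∀ s ∈ Icc (t₀ - ρ) (t₀ + ρ),
      |v y t - v x s| ≤ (n + 1) * (|y - x| + |s - t|) := by
    intro x hx t ht hxt y hy s hs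
    have h1 : (x, t) ∈ A n :=
      @hOA ⟨(x, t), (hmem x hx t ht).2, hxt⟩ (hmem x hx t ht).1
    have hyx : |y - x| ≤ 2 * ρ := by
      rw [abs_le]; constructor <;> linarith [hx.1, hx.2, hy.1, hy.2]
    have hst : |s - t| ≤ 2 * ρ := by
      rw [abs_le]; constructor <;> linarith [hs.1, hs.2, ht.1, ht.2]
    exact h1 y (hmem y hy t ht).2.1 s (hmem x hx s hs).2.2
      ⟨by dsimp only; nlinarith, by dsimp only; nlinarith⟩
  have hup := fun ε hε => HeatSubsolutionAt.eventually_le (v := v) (B := B) (ε := ε) hρ hC hn.le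
    hF hqF (fun x hx t ht => hnF (x, t)) hlip
    (fun x hx t ht => hB x (hmem x hx t ht).2.1 t (hmem x hx t ht).2.2)
    (fun x hx t ht => hpde x (hmem x hx t ht).2.1 t (hmem x hx t ht).2.2) hε
  have hlow := fun ε hε => HeatSubsolutionAt.eventually_le (v := fun y s => -v y s) (B := B)
    (ε := ε) hρ hC hn.le
    hF hqF (fun x hx t ht h => (hnF (x, t) h).neg)
    (fun x hx t ht hxt y hy s hs => by
      rw [← neg_sub', abs_neg]; exact hlip x hx t ht hxt y hy s hs)
    (fun x hx t ht => by
      rw [abs_neg]; exact hB x (hmem x hx t ht).2.1 t (hmem x hx t ht).2.2)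
    (fun x hx t ht => hpde' x (hmem x hx t ht).2.1 t (hmem x hx t ht).2.2) hε
  rw [ContinuousAt, Metric.tendsto_nhds]
  intro ε hε
  filter_upwards [hup (ε / 2) (by linarith), hlow (ε / 2) (by linarith)] with q h1 h2
  rw [Real.dist_eq, abs_lt]
  constructor <;> simp only [hV] <;> linarith

/-- The profile `(T − t + ε(x − b)²)^(−α)`, singular at `(b, T)`. -/
def sideProfile (ε α T b x t : ℝ) : ℝ := (T - t + ε * (x - b) ^ 2) ^ (-α)

section sideProfile

variable {ε α T b x t : ℝ}

theorem sideProfile_base_pos (hε : 0 ≤ ε) (ht : t < T) : 0 < T - t + ε * (x - b) ^ 2 := by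
  have : 0 ≤ ε * (x - b) ^ 2 := by positivity
  linarith

theorem hasDerivAt_sideProfile_base :
    HasDerivAt (fun y => T - t + ε * (y - b) ^ 2) (2 * ε * (x - b)) x := by
  refine (((((hasDerivAt_id' x).sub_const b).pow 2).const_mul ε).const_add (T - t)).congr_deriv ?_
  norm_num; ring

theorem hasDerivAt_sideProfile_space (hε : 0 ≤ ε) (ht : t < T) :
    HasDerivAt (fun y => sideProfile ε α T b y t)
      (2 * ε * (x - b) * -α * (T - t + ε * (x - b) ^ 2) ^ (-α - 1)) x :=
  hasDerivAt_sideProfile_base.rpow_const (Or.inl (sideProfile_base_pos hε ht).ne')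

theorem hasDerivAt_sideProfile_space_space (hε : 0 ≤ ε) (ht : t < T) :
    HasDerivAt (fun y => 2 * ε * (y - b) * -α * (T - t + ε * (y - b) ^ 2) ^ (-α - 1))
      (2 * ε * -α * (T - t + ε * (x - b) ^ 2) ^ (-α - 1) + 2 * ε * (x - b) * -α *
        (2 * ε * (x - b) * (-α - 1) * (T - t + ε * (x - b) ^ 2) ^ (-α - 1 - 1))) x := by
  have h := hasDerivAt_sideProfile_base.rpow_const (p := -α - 1)
    (Or.inl (sideProfile_base_pos (x := x) (b := b) hε ht).ne')
  refine (((((hasDerivAt_id' x).sub_const b).const_mul (2 * ε)).mul_const (-α)).mul h).congr_deriv ?_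
  ring

theorem hasDerivAt_sideProfile_time (hε : 0 ≤ ε) (ht : t < T) :
    HasDerivAt (fun s => sideProfile ε α T b x s)
      (α * (T - t + ε * (x - b) ^ 2) ^ (-α - 1)) t := by
  have h : HasDerivAt (fun s => T - s + ε * (x - b) ^ 2) (-1) t :=
    ((hasDerivAt_id' t).const_sub T).add_const _
  refine (h.rpow_const (p := -α) (Or.inl (sideProfile_base_pos hε ht).ne')).congr_deriv ?_
  ring

theorem sideProfile_supersolution (hε : 0 ≤ ε) (hα : 0 ≤ α) (hεα : 4 * (α + 1) * ε ≤ 1)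
    (ht : t < T) :
    0 ≤ α * (T - t + ε * (x - b) ^ 2) ^ (-α - 1) -
      (2 * ε * -α * (T - t + ε * (x - b) ^ 2) ^ (-α - 1) + 2 * ε * (x - b) * -α *
        (2 * ε * (x - b) * (-α - 1) * (T - t + ε * (x - b) ^ 2) ^ (-α - 1 - 1))) := by
  have hpos := sideProfile_base_pos (x := x) (b := b) hε ht
  set ρ := T - t + ε * (x - b) ^ 2 with hρ
  have h1 : ρ ^ (-α - 1) = ρ ^ (-α - 1 - 1) * ρ := by
    rw [← rpow_add_one hpos.ne']; congr 1; ring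
  have h2 : 0 < ρ ^ (-α - 1 - 1) := rpow_pos_of_pos hpos _
  have h3 : ε * (x - b) ^ 2 ≤ ρ := by linarith
  have h4 : 0 ≤ 4 * (α + 1) * ε := by positivity
  have h5 : 4 * (α + 1) * ε * (ε * (x - b) ^ 2) ≤ 1 * ρ :=
    mul_le_mul hεα h3 (by positivity) zero_le_one
  have h6 : 0 ≤ α * ρ ^ (-α - 1 - 1) *
      (ρ + 2 * ε * ρ - 4 * (α + 1) * ε * (ε * (x - b) ^ 2)) :=
    mul_nonneg (by positivity) (by nlinarith)
  rw [h1]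
  linarith

end sideProfile

/-- A function that is a heat subsolution where positive, and that blows up at most polynomially
as `t → T`, is bounded above on the inner half of its domain. -/
theorem HeatSubsolutionAt.exists_upper_bound {u : ℝ → ℝ → ℝ} {T a R B C α : ℝ} (hR : 0 < R)
    (hα : 0 < α) (hC : 0 ≤ C) (hB : 0 ≤ B)
    (hcont : ∀ x ∈ Icc (a - R) (a + R), ∀ t ∈ Ico (T - R ^ 2) T,
      ContinuousAt (fun q : ℝ × ℝ => u q.1 q.2) (x, t))
    (hle : ∀ x ∈ Icc (a - R) (a + R), ∀ t ∈ Ico (T - R ^ 2) T, u x t ≤ B * (T - t) ^ (-α))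
    (hpde : ∀ x ∈ Icc (a - R) (a + R), ∀ t ∈ Ico (T - R ^ 2) T, 0 < u x t →
      HeatSubsolutionAt u C x t) :
    ∃ M, ∀ x ∈ Icc (a - R / 2) (a + R / 2), ∀ t ∈ Ico (T - R ^ 2) T, u x t ≤ M := by
  set ε := 1 / (4 * (α + 1)) with hεdef
  have hε : 0 < ε := by positivity
  have hεα : 4 * (α + 1) * ε ≤ 1 := by rw [hεdef]; field_simp; rfl
  have hR2 : 0 < R ^ 2 := by positivity
  set A := B * (R ^ 2) ^ (-α) with hA
  have hA0 : 0 ≤ A := by positivity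
  set E := (ε * (R / 2) ^ 2) ^ (-α) with hE
  refine ⟨A + (C + 1) * R ^ 2 + B * (E + E), fun x hx t ht => ?_⟩
  have hS0 : ∀ b x, ∀ s < T, 0 ≤ sideProfile ε α T b x s :=
    fun b x s hs => (rpow_pos_of_pos (sideProfile_base_pos hε.le hs) _).le
  have hsT : ∀ s ∈ Icc (T - R ^ 2) t, s < T := fun s hs => hs.2.trans_lt ht.2
  have hsI : ∀ s ∈ Icc (T - R ^ 2) t, s ∈ Ico (T - R ^ 2) T := fun s hs => ⟨hs.1, hsT s hs⟩
  have hψ0 : ∀ b b' x, ∀ s ∈ Icc (T - R ^ 2) t, 0 ≤ (C + 1) * (s - (T - R ^ 2)) ∧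
      0 ≤ B * sideProfile ε α T b x s ∧ 0 ≤ B * sideProfile ε α T b' x s := fun b b' x s hs =>
    ⟨mul_nonneg (by linarith) (by linarith [hs.1]), mul_nonneg hB (hS0 _ _ _ (hsT s hs)),
      mul_nonneg hB (hS0 _ _ _ (hsT s hs))⟩
  have hlocal : ∀ b s, sideProfile ε α T b b s = (T - s) ^ (-α) := by
    intro b s; simp [sideProfile]
  have h := le_of_heat_comparison (x₁ := a - R) (x₂ := a + R) (t₁ := T - R ^ 2) (t₂ := t) (u := u)
    (ψ := fun y s => A + (C + 1) * (s - (T - R ^ 2)) +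
      B * (sideProfile ε α T (a - R) y s + sideProfile ε α T (a + R) y s))
    (ψx := fun y s => B *
      (2 * ε * (y - (a - R)) * -α * (T - s + ε * (y - (a - R)) ^ 2) ^ (-α - 1) +
      2 * ε * (y - (a + R)) * -α * (T - s + ε * (y - (a + R)) ^ 2) ^ (-α - 1)))
    (ψxx := fun y s => B *
      ((2 * ε * -α * (T - s + ε * (y - (a - R)) ^ 2) ^ (-α - 1) + 2 * ε * (y - (a - R)) * -α *
        (2 * ε * (y - (a - R)) * (-α - 1) * (T - s + ε * (y - (a - R)) ^ 2) ^ (-α - 1 - 1))) +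
      (2 * ε * -α * (T - s + ε * (y - (a + R)) ^ 2) ^ (-α - 1) + 2 * ε * (y - (a + R)) * -α *
        (2 * ε * (y - (a + R)) * (-α - 1) * (T - s + ε * (y - (a + R)) ^ 2) ^ (-α - 1 - 1)))))
    (ψt := fun y s => (C + 1) + B *
      (α * (T - s + ε * (y - (a - R)) ^ 2) ^ (-α - 1) +
        α * (T - s + ε * (y - (a + R)) ^ 2) ^ (-α - 1)))
    (C := C) ?_ ?_ ?_ ?_ ?_ ?_ ?_ ?_ ?_
    x ⟨by linarith [hx.1], by linarith [hx.2]⟩ t ⟨ht.1, le_rfl⟩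
  · have hS : ∀ b, (R / 2) ^ 2 ≤ (x - b) ^ 2 → sideProfile ε α T b x t ≤ E := by
      intro b hb
      refine rpow_le_rpow_of_nonpos (by positivity) ?_ (by linarith)
      have : ε * (R / 2) ^ 2 ≤ ε * (x - b) ^ 2 := by gcongr
      linarith [ht.2]
    have h1 := hS (a - R) (by nlinarith [hx.1])
    have h2 := hS (a + R) (by nlinarith [hx.2])
    have h3 : (C + 1) * (t - (T - R ^ 2)) ≤ (C + 1) * R ^ 2 := by
      gcongr; linarith [ht.2]
    have h4 : B * (sideProfile ε α T (a - R) x t + sideProfile ε α T (a + R) x t) ≤ B * (E + E) := by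
      gcongr
    linarith
  · rintro ⟨y, s⟩ ⟨hy, hs⟩
    refine ContinuousAt.continuousWithinAt ((hcont y hy s (hsI s hs)).sub ?_)
    have hb : ∀ b, ContinuousAt (fun q : ℝ × ℝ => sideProfile ε α T b q.1 q.2) (y, s) := by
      intro b
      refine ContinuousAt.rpow_const (by fun_prop) (Or.inl ?_)
      exact (sideProfile_base_pos hε.le (hsT s hs)).ne'
    have h1 := hb (a - R)
    have h2 := hb (a + R)
    fun_prop
  · intro y hy
    have h1 := hle y hy (T - R ^ 2) ⟨le_rfl, by linarith⟩
    rw [sub_sub_cancel] at h1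
    obtain ⟨h2, h3, h4⟩ := hψ0 (a - R) (a + R) y (T - R ^ 2) ⟨le_rfl, ht.1⟩
    linarith
  · intro s hs
    obtain ⟨h2, h3, h4⟩ := hψ0 (a - R) (a + R) (a - R) s hs
    rw [hlocal] at *
    linarith [hle (a - R) ⟨le_rfl, by linarith⟩ s (hsI s hs)]
  · intro s hs
    obtain ⟨h2, h3, h4⟩ := hψ0 (a - R) (a + R) (a + R) s hs
    rw [hlocal] at *
    linarith [hle (a + R) ⟨by linarith, le_rfl⟩ s (hsI s hs)]
  · intro y _ s hs
    have hsT' := hsT s ⟨hs.1.le, hs.2⟩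
    exact (((hasDerivAt_sideProfile_space hε.le hsT').add
      (hasDerivAt_sideProfile_space hε.le hsT')).const_mul B).const_add _
  · intro y _ s hs
    have hsT' := hsT s ⟨hs.1.le, hs.2⟩
    exact ((hasDerivAt_sideProfile_space_space hε.le hsT').add
      (hasDerivAt_sideProfile_space_space hε.le hsT')).const_mul B
  · intro y _ s hs
    have hsT' := hsT s ⟨hs.1.le, hs.2⟩
    have h1 : HasDerivAt (fun r : ℝ => A + (C + 1) * (r - (T - R ^ 2))) (C + 1) s := by
      refine ((((hasDerivAt_id' s).sub_const _).const_mul (C + 1)).const_add A).congr_deriv ?_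
      ring
    exact h1.add (((hasDerivAt_sideProfile_time hε.le hsT').add
      (hasDerivAt_sideProfile_time hε.le hsT')).const_mul B)
  · intro y _ s hs
    have hsT' := hsT s ⟨hs.1.le, hs.2⟩
    have h1 := mul_nonneg hB (sideProfile_supersolution (x := y) (b := a - R) hε.le hα.le hεα hsT')
    have h2 := mul_nonneg hB (sideProfile_supersolution (x := y) (b := a + R) hε.le hα.le hεα hsT')
    linarith
  · intro y hy s hs hpos
    refine hpde y ⟨hy.1.le, hy.2.le⟩ s (hsI s ⟨hs.1.le, hs.2⟩) ?_
    obtain ⟨h2, h3, h4⟩ := hψ0 (a - R) (a + R) y s ⟨hs.1.le, hs.2⟩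
    linarith

/-- Pointwise form of `|∂ₜv − ∂ₓ²v| ≤ C (1 + |v| ^ p)` at `(x, t)`. -/
def SemilinearHeatAt (v : ℝ → ℝ → ℝ) (C p x t : ℝ) : Prop :=
  ContDiffAt ℝ 2 (fun y => v y t) x ∧
    ∃ g, HasDerivAt (fun s => v x s) g t ∧
      |g - deriv (deriv fun y => v y t) x| ≤ C * (1 + |v x t| ^ p)

theorem SemilinearHeatAt.neg {v : ℝ → ℝ → ℝ} {C p x t : ℝ} (h : SemilinearHeatAt v C p x t) :
    SemilinearHeatAt (fun y s => -v y s) C p x t := by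
  obtain ⟨h1, g, h2, h3⟩ := h
  refine ⟨h1.neg, -g, h2.neg, ?_⟩
  have hd : deriv (deriv fun y => -v y t) x = -deriv (deriv fun y => v y t) x := by
    rw [deriv.fun_neg', deriv.fun_neg]
  rw [hd, abs_neg, show -g - -deriv (deriv fun y => v y t) x =
    -(g - deriv (deriv fun y => v y t) x) by ring, abs_neg]
  exact h3

theorem SemilinearHeatAt.heatSubsolutionAt {v : ℝ → ℝ → ℝ} {C p x t B : ℝ}
    (h : SemilinearHeatAt v C p x t) (hC : 0 ≤ C) (hp : 0 ≤ p) (hB : |v x t| ≤ B) :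
    HeatSubsolutionAt v (C * (1 + B ^ p)) x t := by
  obtain ⟨h1, g, h2, h3⟩ := h
  refine ⟨h1, g, h2, (le_abs_self _).trans (h3.trans ?_)⟩
  gcongr

/-- Multiplying a positive solution by an integrating factor `μ` that absorbs the nonlinearity. -/
theorem SemilinearHeatAt.heatSubsolutionAt_mul {v : ℝ → ℝ → ℝ} {μ : ℝ → ℝ} {C p x t h m : ℝ}
    (hv : SemilinearHeatAt v C p x t) (hC : 0 ≤ C) (hpos : 0 < v x t)
    (hμ : HasDerivAt μ (-h * μ t) t) (hμ0 : 0 < μ t) (hμm : μ t ≤ m)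
    (habs : C * |v x t| ^ p ≤ h * |v x t|) :
    HeatSubsolutionAt (fun y s => v y s * μ s) (C * m) x t := by
  obtain ⟨h1, g, h2, h3⟩ := hv
  refine ⟨h1.mul contDiffAt_const, _, h2.mul hμ, ?_⟩
  have hd : deriv (deriv fun y => v y t * μ t) x = deriv (deriv fun y => v y t) x * μ t := by
    rw [deriv_mul_const_field', deriv_mul_const_field]
  have h4 : g - deriv (deriv fun y => v y t) x - h * v x t ≤ C := by
    rw [abs_of_pos hpos] at habs h3
    linarith [(le_abs_self _).trans h3]
  rw [hd]
  calc g * μ t + v x t * (-h * μ t) - deriv (deriv fun y => v y t) x * μ t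
      = (g - deriv (deriv fun y => v y t) x - h * v x t) * μ t := by ring
    _ ≤ C * μ t := by gcongr
    _ ≤ C * m := by gcongr

theorem SemilinearHeatAt.exists_upper_bound {v : ℝ → ℝ → ℝ} {μ h : ℝ → ℝ}
    {T a R B C p α m : ℝ} (hR : 0 < R) (hα : 0 < α) (hC : 0 ≤ C) (hB : 0 ≤ B)
    (hcont : ∀ x ∈ Icc (a - R) (a + R), ∀ t ∈ Ico (T - R ^ 2) T,
      ContinuousAt (fun q : ℝ × ℝ => v q.1 q.2) (x, t))
    (hle : ∀ x ∈ Icc (a - R) (a + R), ∀ t ∈ Ico (T - R ^ 2) T, |v x t| ≤ B * (T - t) ^ (-α))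
    (hpde : ∀ x ∈ Icc (a - R) (a + R), ∀ t ∈ Ico (T - R ^ 2) T, SemilinearHeatAt v C p x t)
    (hμ : ∀ t ∈ Ico (T - R ^ 2) T, HasDerivAt μ (-h t * μ t) t ∧ 0 < μ t ∧ μ t ≤ m)
    (habs : ∀ x ∈ Icc (a - R) (a + R), ∀ t ∈ Ico (T - R ^ 2) T,
      C * |v x t| ^ p ≤ h t * |v x t|) :
    ∃ M, ∀ x ∈ Icc (a - R / 2) (a + R / 2), ∀ t ∈ Ico (T - R ^ 2) T, v x t * μ t ≤ M := by
  have hm : 0 ≤ m := by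
    have hT : T - R ^ 2 ∈ Ico (T - R ^ 2) T := ⟨le_rfl, by linarith [pow_pos hR 2]⟩
    exact (hμ _ hT).2.1.le.trans (hμ _ hT).2.2
  refine HeatSubsolutionAt.exists_upper_bound (u := fun x t => v x t * μ t) (B := B * m)
    (C := C * m) hR hα (by positivity) (by positivity) ?_ ?_ ?_
  · intro x hx t ht
    have hμc : ContinuousAt (fun q : ℝ × ℝ => μ q.2) (x, t) :=
      ContinuousAt.comp (f := Prod.snd) (hμ t ht).1.continuousAt continuousAt_snd
    exact (hcont x hx t ht).mul hμc
  · intro x hx t ht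
    obtain ⟨-, h0, h1⟩ := hμ t ht
    have hT : 0 ≤ (T - t) ^ (-α) := rpow_nonneg (by linarith [ht.2]) _
    calc v x t * μ t ≤ B * (T - t) ^ (-α) * m :=
          mul_le_mul ((le_abs_self _).trans (hle x hx t ht)) h1 h0.le (by positivity)
      _ = B * m * (T - t) ^ (-α) := by ring
  · intro x hx t ht hpos
    obtain ⟨hd, h0, h1⟩ := hμ t ht
    exact (hpde x hx t ht).heatSubsolutionAt_mul hC (pos_of_mul_pos_left hpos h0.le) hd h0 h1
      (habs x hx t ht)

theorem SemilinearHeatAt.exists_abs_bound {v : ℝ → ℝ → ℝ} {μ h : ℝ → ℝ}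
    {T a R B C p α m : ℝ} (hR : 0 < R) (hα : 0 < α) (hC : 0 ≤ C) (hB : 0 ≤ B)
    (hcont : ∀ x ∈ Icc (a - R) (a + R), ∀ t ∈ Ico (T - R ^ 2) T,
      ContinuousAt (fun q : ℝ × ℝ => v q.1 q.2) (x, t))
    (hle : ∀ x ∈ Icc (a - R) (a + R), ∀ t ∈ Ico (T - R ^ 2) T, |v x t| ≤ B * (T - t) ^ (-α))
    (hpde : ∀ x ∈ Icc (a - R) (a + R), ∀ t ∈ Ico (T - R ^ 2) T, SemilinearHeatAt v C p x t)
    (hμ : ∀ t ∈ Ico (T - R ^ 2) T, HasDerivAt μ (-h t * μ t) t ∧ 0 < μ t ∧ μ t ≤ m)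
    (habs : ∀ x ∈ Icc (a - R) (a + R), ∀ t ∈ Ico (T - R ^ 2) T,
      C * |v x t| ^ p ≤ h t * |v x t|) :
    ∃ M, 0 ≤ M ∧ ∀ x ∈ Icc (a - R / 2) (a + R / 2), ∀ t ∈ Ico (T - R ^ 2) T,
      |v x t| * μ t ≤ M := by
  obtain ⟨M₁, h₁⟩ := exists_upper_bound hR hα hC hB hcont hle hpde hμ habs
  obtain ⟨M₂, h₂⟩ := exists_upper_bound (v := fun x t => -v x t) hR hα hC hB
    (fun x hx t ht => (hcont x hx t ht).neg)
    (fun x hx t ht => by simpa using hle x hx t ht) (fun x hx t ht => (hpde x hx t ht).neg) hμ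
    (fun x hx t ht => by simpa using habs x hx t ht)
  refine ⟨max 0 (max M₁ M₂), le_max_left _ _, fun x hx t ht => ?_⟩
  refine le_trans ?_ (le_max_right _ _)
  rcases abs_cases (v x t) with ⟨h, -⟩ | ⟨h, -⟩ <;> rw [h]
  · exact (h₁ x hx t ht).trans (le_max_left _ _)
  · exact (h₂ x hx t ht).trans (le_max_right _ _)

theorem rpow_le_absorption_rate {w C E s β p : ℝ} (hp : 1 < p) (hC : 0 ≤ C) (hE : 0 ≤ E)
    (hs : 0 < s) (hw : 0 ≤ w) (hwE : w ≤ E * s ^ (-β)) :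
    C * w ^ p ≤ C * E ^ (p - 1) * s ^ (-(β * (p - 1))) * w := by
  have h1 : w ^ (p - 1) ≤ E ^ (p - 1) * s ^ (-(β * (p - 1))) := by
    calc w ^ (p - 1) ≤ (E * s ^ (-β)) ^ (p - 1) := rpow_le_rpow hw hwE (by linarith)
      _ = E ^ (p - 1) * s ^ (-(β * (p - 1))) := by
        rw [mul_rpow hE (by positivity), ← rpow_mul hs.le, neg_mul]
  calc C * w ^ p = C * w ^ (p - 1) * w := by
        rw [mul_assoc, ← rpow_add_one' hw (by linarith), sub_add_cancel]
    _ ≤ C * (E ^ (p - 1) * s ^ (-(β * (p - 1)))) * w := by gcongr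
    _ = _ := by ring

/-- A bounded solution is jointly continuous, although only separate regularity is assumed. -/
theorem SemilinearHeatAt.continuousAt {v : ℝ → ℝ → ℝ} {T a r B C p α : ℝ} (hC : 0 ≤ C)
    (hp : 0 ≤ p) (hα : 0 ≤ α) (hB : 0 ≤ B)
    (hle : ∀ x ∈ Ioo (a - r) (a + r), ∀ t ∈ Ioo (T - r ^ 2) T, |v x t| ≤ B * (T - t) ^ (-α))
    (hpde : ∀ x ∈ Ioo (a - r) (a + r), ∀ t ∈ Ioo (T - r ^ 2) T, SemilinearHeatAt v C p x t) :
    ∀ x ∈ Ioo (a - r) (a + r), ∀ t ∈ Ioo (T - r ^ 2) T,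
      ContinuousAt (fun q : ℝ × ℝ => v q.1 q.2) (x, t) := by
  intro x hx t ht
  set S := (t + T) / 2 with hS
  have hST : S < T := by linarith [ht.2]
  have hsub : ∀ s ∈ Ioo (T - r ^ 2) S, s ∈ Ioo (T - r ^ 2) T := fun s hs => ⟨hs.1, hs.2.trans hST⟩
  have hbd : ∀ y ∈ Ioo (a - r) (a + r), ∀ s ∈ Ioo (T - r ^ 2) S,
      |v y s| ≤ B * (T - S) ^ (-α) := by
    intro y hy s hs
    refine (hle y hy s (hsub s hs)).trans (mul_le_mul_of_nonneg_left ?_ hB)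
    exact rpow_le_rpow_of_nonpos (by linarith) (by linarith [hs.2]) (by linarith)
  have hTS : 0 ≤ (T - S) ^ (-α) := rpow_nonneg (by linarith) _
  refine HeatSubsolutionAt.continuousAt (C := C * (1 + (B * (T - S) ^ (-α)) ^ p))
    (by positivity) hbd ?_ ?_ x hx t ⟨ht.1, by linarith [ht.2]⟩
  · exact fun y hy s hs => (hpde y hy s (hsub s hs)).heatSubsolutionAt hC hp (hbd y hy s hs)
  · exact fun y hy s hs => (hpde y hy s (hsub s hs)).neg.heatSubsolutionAt hC hp
      (by simpa using hbd y hy s hs)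

theorem hasDerivAt_const_sub_rpow {T t κ : ℝ} (ht : t < T) :
    HasDerivAt (fun s => (T - s) ^ κ) (-(κ * (T - t) ^ (κ - 1))) t := by
  refine (((hasDerivAt_id' t).const_sub T).rpow_const (p := κ)
    (Or.inl (by linarith))).congr_deriv ?_
  ring

/-- Giga–Kohn: no blow-up under the ODE threshold. If `v` solves the differential
inequality `|∂ₜv − ∂ₓ²v| ≤ C0(1+|v|^p)` on `B(a,r) × [T−r²,T)` and satisfies
`|v| ≤ η0 (T−t)^{−1/(p−1)}` there, then `v` does not blow up at `(a,T)`. -/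
theorem giga_kohn_no_blowup (p : ℝ) (hp : 1 < p) :
    ∀ C0 > (0:ℝ), ∃ η0 > (0:ℝ), ∀ T a r : ℝ, 0 < r →
    ∀ v g : ℝ → ℝ → ℝ,
      -- v is a classical solution of the differential inequality
      (∀ t ∈ Set.Ico (T - r^2) T, ContDiffOn ℝ 2 (fun x => v x t) (Metric.ball a r)) →
      (∀ x ∈ Metric.ball a r, ∀ t ∈ Set.Ico (T - r^2) T,
        HasDerivWithinAt (fun τ => v x τ) (g x t) (Set.Ico (T - r^2) T) t ∧
        |g x t - deriv (deriv (fun ξ => v ξ t)) x| ≤ C0 * (1 + |v x t| ^ p)) →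
      -- the ODE-threshold bound
      (∀ x ∈ Metric.ball a r, ∀ t ∈ Set.Ico (T - r^2) T,
        |v x t| ≤ η0 * (T - t) ^ (-(1/(p-1)))) →
      -- conclusion: v is bounded near (a,T)
      ∃ r' : ℝ, 0 < r' ∧ r' < r ∧ ∃ M : ℝ,
        ∀ x ∈ Metric.ball a r', ∀ t ∈ Set.Ico (T - r'^2) T, |v x t| ≤ M := by
  intro C0 hC0
  set α := 1 / (p - 1) with hαdef
  have hp1 : 0 < p - 1 := by linarith
  have hα : 0 < α := by positivity
  have hαp : α * (p - 1) = 1 := by rw [hαdef]; field_simp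
  set κ := α / 2 with hκdef
  have hκ : 0 < κ := by positivity
  have hκp : κ * (p - 1) = 1 / 2 := by rw [hκdef]; linarith
  set η := (κ / C0) ^ α with hη
  have hη0 : 0 < η := by positivity
  have hCη : C0 * η ^ (p - 1) = κ := by
    rw [hη, ← rpow_mul (by positivity), hαp, rpow_one]
    field_simp
  refine ⟨η, hη0, fun T a r hr v g hspace htime hbound => ?_⟩
  rw [Real.ball_eq_Ioo] at hspace htime hbound
  have hpde : ∀ x ∈ Ioo (a - r) (a + r), ∀ t ∈ Ioo (T - r ^ 2) T,
      SemilinearHeatAt v C0 p x t := by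
    intro x hx t ht
    obtain ⟨h1, h2⟩ := htime x hx t ⟨ht.1.le, ht.2⟩
    exact ⟨(hspace t ⟨ht.1.le, ht.2⟩).contDiffAt (Ioo_mem_nhds hx.1 hx.2), g x t,
      h1.hasDerivAt (Ico_mem_nhds ht.1 ht.2), h2⟩
  have hle : ∀ x ∈ Ioo (a - r) (a + r), ∀ t ∈ Ioo (T - r ^ 2) T,
      |v x t| ≤ η * (T - t) ^ (-α) := fun x hx t ht => hbound x hx t ⟨ht.1.le, ht.2⟩
  have hcont := SemilinearHeatAt.continuousAt hC0.le (by linarith) hα.le hη0.le hle hpde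
  have hsub : ∀ R, 0 < R → R < r → (∀ x ∈ Icc (a - R) (a + R), x ∈ Ioo (a - r) (a + r)) ∧
      ∀ t ∈ Ico (T - R ^ 2) T, t ∈ Ioo (T - r ^ 2) T := by
    intro R hR hRr
    have : R ^ 2 < r ^ 2 := by gcongr
    exact ⟨fun x hx => ⟨by linarith [hx.1], by linarith [hx.2]⟩,
      fun t ht => ⟨by linarith [ht.1], ht.2⟩⟩
  obtain ⟨M₁, hM₁0, hM₁⟩ : ∃ M, 0 ≤ M ∧ ∀ x ∈ Icc (a - r / 2 / 2) (a + r / 2 / 2),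
      ∀ t ∈ Ico (T - (r / 2) ^ 2) T, |v x t| * (T - t) ^ κ ≤ M := by
    obtain ⟨hsx, hst⟩ := hsub (r / 2) (by positivity) (by linarith)
    refine SemilinearHeatAt.exists_abs_bound (μ := fun t => (T - t) ^ κ)
      (h := fun t => κ * (T - t) ^ (-(1 : ℝ))) (m := ((r / 2) ^ 2) ^ κ) (by positivity) hα hC0.le
      hη0.le (fun x hx t ht => hcont x (hsx x hx) t (hst t ht))
      (fun x hx t ht => hle x (hsx x hx) t (hst t ht))
      (fun x hx t ht => hpde x (hsx x hx) t (hst t ht)) (fun t ht => ?_) (fun x hx t ht => ?_)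
    · have hT : 0 < T - t := by linarith [ht.2]
      refine ⟨(hasDerivAt_const_sub_rpow ht.2).congr_deriv ?_, by positivity, ?_⟩
      · rw [sub_eq_add_neg κ 1, rpow_add hT]
        ring
      · exact rpow_le_rpow hT.le (by linarith [ht.1]) hκ.le
    · have hT : 0 < T - t := by linarith [ht.2]
      have := rpow_le_absorption_rate hp hC0.le hη0.le hT (abs_nonneg _)
        (hle x (hsx x hx) t (hst t ht))
      rwa [hCη, hαp] at this
  set L := C0 * M₁ ^ (p - 1) with hL
  have hL0 : 0 ≤ L := by positivity
  obtain ⟨M₂, hM₂0, hM₂⟩ : ∃ M, 0 ≤ M ∧ ∀ x ∈ Icc (a - r / 4 / 2) (a + r / 4 / 2),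
      ∀ t ∈ Ico (T - (r / 4) ^ 2) T, |v x t| * exp (2 * L * (T - t) ^ (1 / 2 : ℝ)) ≤ M := by
    obtain ⟨hsx, hst⟩ := hsub (r / 4) (by positivity) (by linarith)
    have hle' : ∀ x ∈ Icc (a - r / 4) (a + r / 4), ∀ t ∈ Ico (T - (r / 4) ^ 2) T,
        |v x t| ≤ M₁ * (T - t) ^ (-κ) := by
      intro x hx t ht
      have hT : 0 < T - t := by linarith [ht.2]
      rw [rpow_neg hT.le, ← div_eq_mul_inv, le_div_iff₀ (by positivity)]
      exact hM₁ x ⟨by linarith [hx.1], by linarith [hx.2]⟩ t ⟨by nlinarith [ht.1], ht.2⟩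
    refine SemilinearHeatAt.exists_abs_bound (μ := fun t => exp (2 * L * (T - t) ^ (1 / 2 : ℝ)))
      (h := fun t => L * (T - t) ^ (-(1 / 2 : ℝ)))
      (m := exp (2 * L * ((r / 4) ^ 2) ^ (1 / 2 : ℝ))) (by positivity) hκ hC0.le
      hM₁0 (fun x hx t ht => hcont x (hsx x hx) t (hst t ht)) hle'
      (fun x hx t ht => hpde x (hsx x hx) t (hst t ht)) (fun t ht => ?_) (fun x hx t ht => ?_)
    · have hT : 0 < T - t := by linarith [ht.2]
      refine ⟨((hasDerivAt_const_sub_rpow ht.2).const_mul (2 * L)).exp.congr_deriv ?_,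
        by positivity, ?_⟩
      · rw [show (1 / 2 : ℝ) - 1 = -(1 / 2) by norm_num]
        ring
      · have : T - t ≤ (r / 4) ^ 2 := by linarith [ht.1]
        gcongr
    · have hT : 0 < T - t := by linarith [ht.2]
      have := rpow_le_absorption_rate hp hC0.le hM₁0 hT (abs_nonneg _) (hle' x hx t ht)
      rwa [hκp] at this
  refine ⟨r / 8, by positivity, by linarith, M₂, fun x hx t ht => ?_⟩
  rw [Real.ball_eq_Ioo] at hx
  have hT : 0 < T - t := by linarith [ht.2]
  refine le_trans (le_mul_of_one_le_right (abs_nonneg _) (one_le_exp (by positivity))) (hM₂ x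
    ⟨by linarith [hx.1], by linarith [hx.2]⟩ t ⟨by nlinarith [ht.1], ht.2⟩)

end
end

section
/- Fix K0>0 and T∈(0,e^{−1}). For every θ0≠0 with |θ0| small enough there exists a unique t0(θ0)∈(0,T) satisfying |θ0| = K0√((T−t0(θ0))|log(T−t0(θ0))|), and as θ0→0 one has the asymptotics log(T−t0(θ0)) ∼ 2 log|θ0| and T−t0(θ0) ∼ θ0²/(2K0²|log|θ0||), i.e. the ratios log(T−t0(θ0))/(2 log|θ0|) and (T−t0(θ0))·2K0²|log|θ0||/θ0² both tend to 1. -/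
noncomputable section

open Real Set Filter Topology

theorem strictMonoOn_negMulLog : StrictMonoOn negMulLog (Icc 0 (exp (-1))) := by
  refine strictMonoOn_of_deriv_pos (convex_Icc _ _) continuous_negMulLog.continuousOn ?_
  intro x hx
  rw [interior_Icc] at hx
  rw [deriv_negMulLog hx.1.ne']
  have : log x < -1 := (log_lt_iff_lt_exp hx.1).2 hx.2
  linarith

theorem tendsto_log_mul_negMulLog_div_log {c : ℝ} (hc : 0 < c) :
    Tendsto (fun s => log (c * negMulLog s) / log s) (𝓝[>] 0) (𝓝 1) := by
  have hlog : Tendsto (fun s => -log s) (𝓝[>] 0) atTop :=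
    tendsto_neg_atBot_atTop.comp tendsto_log_nhdsGT_zero
  have hconst : Tendsto (fun s => log c / -log s) (𝓝[>] 0) (𝓝 0) := hlog.const_div_atTop _
  have hloglog : Tendsto (fun s => log (-log s) / -log s) (𝓝[>] 0) (𝓝 0) :=
    isLittleO_log_id_atTop.tendsto_div_nhds_zero.comp hlog
  have hsum := (tendsto_const_nhds (x := (1 : ℝ))).sub (hconst.add hloglog)
  simp only [add_zero, sub_zero] at hsum
  refine hsum.congr' ?_
  filter_upwards [self_mem_nhdsWithin, hlog.eventually_gt_atTop 0] with s hs hls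
  have hs : 0 < s := hs
  have hne : log s ≠ 0 := (neg_pos.1 hls).ne
  rw [negMulLog, neg_mul_comm, log_mul hc.ne' (mul_pos hs hls).ne', log_mul hs.ne' hls.ne']
  field_simp
  ring

/-- For `s ∈ (0, 1)`, the equation `|θ| = K √(s |log s|)` in terms of `negMulLog`. -/
theorem abs_eq_mul_sqrt_mul_abs_log_iff {K s θ : ℝ} (hK : 0 < K) (hs : 0 < s) (hs1 : s < 1) :
    |θ| = K * √(s * |log s|) ↔ θ ^ 2 = K ^ 2 * negMulLog s := by
  have hlog : log s < 0 := log_neg hs hs1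
  have hpos : 0 ≤ negMulLog s := negMulLog_nonneg hs.le hs1.le
  have heq : s * |log s| = negMulLog s := by rw [abs_of_neg hlog, negMulLog]; ring
  rw [heq, ← sq_eq_sq₀ (abs_nonneg θ) (by positivity), sq_abs, mul_pow, sq_sqrt hpos]

/-- Definition and asymptotics of the intermediate time `t0(θ0)` determined by
`|θ0| = K0 √((T−t0)|log(T−t0)|)`. -/
theorem asymptotics_t0 (K0 T : ℝ) (hK0 : 0 < K0) (hT : 0 < T) (hT1 : T < Real.exp (-1)) :
    ∃ δ > (0:ℝ), ∃ t0 : ℝ → ℝ,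
      (∀ θ0 : ℝ, θ0 ≠ 0 → |θ0| ≤ δ →
        t0 θ0 ∈ Set.Ioo (0:ℝ) T ∧
        |θ0| = K0 * Real.sqrt ((T - t0 θ0) * |Real.log (T - t0 θ0)|) ∧
        -- uniqueness
        (∀ t' ∈ Set.Ioo (0:ℝ) T,
          |θ0| = K0 * Real.sqrt ((T - t') * |Real.log (T - t')|) → t' = t0 θ0)) ∧
      -- log(T−t0(θ0)) ∼ 2 log|θ0| as θ0 → 0
      Tendsto (fun θ0 => Real.log (T - t0 θ0) / (2 * Real.log |θ0|)) (𝓝[≠] 0) (𝓝 1) ∧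
      -- T−t0(θ0) ∼ θ0²/(2K0²|log|θ0||) as θ0 → 0
      Tendsto (fun θ0 => (T - t0 θ0) * (2 * K0^2 * |Real.log (|θ0|)|) / θ0^2)
        (𝓝[≠] 0) (𝓝 1) := by
  have hmono : StrictMonoOn negMulLog (Icc 0 T) :=
    strictMonoOn_negMulLog.mono (Icc_subset_Icc_right hT1.le)
  have hTone : T < 1 := hT1.trans (exp_lt_one_iff.2 (by norm_num))
  have hneg : ∀ {s}, 0 < s → s ≤ T → 0 < negMulLog s := fun hs hsT => by
    simpa using hmono ⟨le_rfl, hT.le⟩ ⟨hs.le, hsT⟩ hs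
  have hexists : ∀ θ : ℝ, ∃ s, θ ≠ 0 → θ ^ 2 < K0 ^ 2 * negMulLog T →
      s ∈ Ioo 0 T ∧ θ ^ 2 = K0 ^ 2 * negMulLog s := by
    intro θ
    by_cases h : θ ≠ 0 ∧ θ ^ 2 < K0 ^ 2 * negMulLog T
    · have hy : θ ^ 2 / K0 ^ 2 ∈ Ioo (negMulLog 0) (negMulLog T) := by
        have := h.1
        refine ⟨by rw [negMulLog_zero]; positivity, ?_⟩
        rw [div_lt_iff₀ (by positivity)]
        linarith [h.2]
      obtain ⟨s, hs, hsy⟩ := intermediate_value_Ioo hT.le continuous_negMulLog.continuousOn hy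
      exact ⟨s, fun _ _ => ⟨hs, by rw [hsy]; field_simp⟩⟩
    · exact ⟨0, fun h1 h2 => absurd ⟨h1, h2⟩ h⟩
  choose s hs using hexists
  have hsmall : ∀ {c : ℝ}, 0 < c → ∀ᶠ θ : ℝ in 𝓝[≠] 0, θ ^ 2 < c := fun hc =>
    nhdsWithin_le_nhds <| (continuous_pow 2).continuousAt.eventually_lt continuousAt_const
      (by simpa using hc)
  have hne : ∀ᶠ θ : ℝ in 𝓝[≠] 0, θ ≠ 0 := self_mem_nhdsWithin
  have hsol : ∀ᶠ θ : ℝ in 𝓝[≠] 0, s θ ∈ Ioo 0 T ∧ θ ^ 2 = K0 ^ 2 * negMulLog (s θ) := by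
    have := hneg hT le_rfl
    filter_upwards [hne, hsmall (c := K0 ^ 2 * negMulLog T) (by positivity)] with θ h1 h2
    exact hs θ h1 h2
  have hs0 : Tendsto s (𝓝[≠] 0) (𝓝[>] 0) := by
    refine tendsto_nhdsWithin_iff.2 ⟨?_, hsol.mono fun θ h => h.1.1⟩
    refine tendsto_order.2 ⟨fun a ha => hsol.mono fun θ h => ha.trans h.1.1, fun a ha => ?_⟩
    have hm : 0 < min a T := lt_min ha hT
    have := hneg hm (min_le_right _ _)
    filter_upwards [hsol, hsmall (c := K0 ^ 2 * negMulLog (min a T)) (by positivity)] with θ h h2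
    rw [h.2, mul_lt_mul_iff_right₀ (by positivity)] at h2
    exact ((hmono.lt_iff_lt ⟨h.1.1.le, h.1.2.le⟩ ⟨hm.le, min_le_right _ _⟩).1 h2).trans_le
      (min_le_left _ _)
  have hratio : Tendsto (fun θ => 2 * log |θ| / log (s θ)) (𝓝[≠] 0) (𝓝 1) := by
    refine ((tendsto_log_mul_negMulLog_div_log (c := K0 ^ 2) (by positivity)).comp hs0).congr' ?_
    filter_upwards [hsol] with θ h
    rw [Function.comp_apply, ← h.2, log_pow, log_abs, Nat.cast_ofNat]
  have hTpos := hneg hT le_rfl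
  refine ⟨K0 * √(negMulLog T / 2), by positivity, fun θ => T - s θ, ?_, ?_, ?_⟩
  · intro θ hθ hle
    have hlt : θ ^ 2 < K0 ^ 2 * negMulLog T := by
      have := pow_le_pow_left₀ (abs_nonneg θ) hle 2
      rw [sq_abs, mul_pow, sq_sqrt (by positivity)] at this
      have : 0 < K0 ^ 2 * negMulLog T := by positivity
      linarith
    obtain ⟨hmem, heq⟩ := hs θ hθ hlt
    refine ⟨⟨by linarith [hmem.2], by linarith [hmem.1]⟩, ?_, fun t ht htθ => ?_⟩
    · rw [sub_sub_cancel]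
      exact (abs_eq_mul_sqrt_mul_abs_log_iff hK0 hmem.1 (hmem.2.trans hTone)).2 heq
    · rw [abs_eq_mul_sqrt_mul_abs_log_iff hK0 (by linarith [ht.2]) (by linarith [ht.1]), heq,
        mul_right_inj' (by positivity)] at htθ
      have := hmono.injOn ⟨hmem.1.le, hmem.2.le⟩ ⟨by linarith [ht.2], by linarith [ht.1]⟩ htθ
      linarith
  · simpa using hratio.inv₀ one_ne_zero
  · refine hratio.congr' ?_
    filter_upwards [hsol, hsmall one_pos, hne] with θ h h1 h0
    have hlogs : log (s θ) < 0 := log_neg h.1.1 (h.1.2.trans hTone)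
    have hlogθ : log |θ| < 0 := log_neg (abs_pos.2 h0) ((sq_lt_one_iff_abs_lt_one θ).1 h1)
    have hspos := h.1.1
    have hlogs' := hlogs.ne
    rw [sub_sub_cancel, h.2, abs_of_neg hlogθ, negMulLog]
    field_simp

end
end

section
/- For every natural number m, the polynomial h_m(y) = Σ_{n=0}^{⌊m/2⌋} m!/(n!(m−2n)!) (−1)^n y^{m−2n} satisfies 𝓛h_m = (1−m/2) h_m, i.e. h_m''(y) − (y/2) h_m'(y) + h_m(y) = (1−m/2) h_m(y) for all y∈ℝ. -/
noncomputable section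

open Real

/-- The coefficient of `y ^ (m - 2 * n)` in `hpoly m`. -/
def hpolyCoeff (m n : ℕ) : ℝ :=
  ((m.factorial : ℝ) / ((n.factorial : ℝ) * ((m - 2*n).factorial : ℝ))) * (-1)^n

theorem hpolyCoeff_succ {m n : ℕ} (h : 2 * n + 2 ≤ m) :
    ((n + 1 : ℕ) : ℝ) * hpolyCoeff m (n + 1) =
      -(hpolyCoeff m n * (((m - 2*n : ℕ) : ℝ) * ((m - 2*n - 1 : ℕ) : ℝ))) := by
  obtain ⟨k, rfl⟩ := Nat.exists_eq_add_of_le h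
  have hn : 2 * n + 2 + k - 2 * n = k + 2 := by omega
  have hn' : 2 * n + 2 + k - 2 * (n + 1) = k := by omega
  have hk : k + 2 - 1 = k + 1 := by omega
  have h1 := Nat.factorial_ne_zero n
  have h2 := Nat.factorial_ne_zero k
  unfold hpolyCoeff
  rw [hn, hn', hk, Nat.factorial_succ n, Nat.factorial_succ (k + 1), Nat.factorial_succ k, pow_succ]
  push_cast
  field_simp
  ring

theorem hasDerivAt_hpoly (m : ℕ) (y : ℝ) :
    HasDerivAt (hpoly m) (∑ n ∈ Finset.range (m/2 + 1),
      hpolyCoeff m n * (((m - 2*n : ℕ) : ℝ) * y^(m - 2*n - 1))) y :=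
  HasDerivAt.fun_sum fun n _ => (hasDerivAt_pow (m - 2*n) y).const_mul (hpolyCoeff m n)

theorem deriv_hpoly (m : ℕ) :
    deriv (hpoly m) = fun y => ∑ n ∈ Finset.range (m/2 + 1),
      hpolyCoeff m n * (((m - 2*n : ℕ) : ℝ) * y^(m - 2*n - 1)) :=
  funext fun y => (hasDerivAt_hpoly m y).deriv

theorem deriv_deriv_hpoly (m : ℕ) (y : ℝ) :
    deriv (deriv (hpoly m)) y = ∑ n ∈ Finset.range (m/2 + 1),
      hpolyCoeff m n * (((m - 2*n : ℕ) : ℝ) *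
        (((m - 2*n - 1 : ℕ) : ℝ) * y^(m - 2*n - 1 - 1))) := by
  rw [deriv_hpoly]
  exact (HasDerivAt.fun_sum fun n _ =>
    ((hasDerivAt_pow (m - 2*n - 1) y).const_mul _).const_mul (hpolyCoeff m n)).deriv

theorem deriv_deriv_hpoly_eq_neg_sum (m : ℕ) (y : ℝ) :
    deriv (deriv (hpoly m)) y =
      -∑ n ∈ Finset.range (m/2 + 1), (n : ℝ) * hpolyCoeff m n * y^(m - 2*n) := by
  have hlast : m - 2 * (m / 2) = 0 ∨ m - 2 * (m / 2) - 1 = 0 := by omega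
  have hlast' : ((m - 2 * (m / 2) : ℕ) : ℝ) * ((m - 2 * (m / 2) - 1 : ℕ) : ℝ) = 0 := by
    rcases hlast with h | h <;> simp [h]
  rw [deriv_deriv_hpoly, Finset.sum_range_succ, Finset.sum_range_succ', ← mul_assoc (Nat.cast _),
    hlast', Nat.cast_zero, zero_mul, zero_mul, zero_mul, mul_zero, add_zero, add_zero,
    ← Finset.sum_neg_distrib]
  refine Finset.sum_congr rfl fun n hn => ?_
  have hn' := Finset.mem_range.mp hn
  have he : m - 2 * (n + 1) = m - 2 * n - 1 - 1 := by omega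
  rw [hpolyCoeff_succ (by omega), he]
  ring

theorem mul_deriv_hpoly (m : ℕ) (y : ℝ) :
    y * deriv (hpoly m) y =
      ∑ n ∈ Finset.range (m/2 + 1), ((m : ℝ) - 2 * n) * hpolyCoeff m n * y^(m - 2*n) := by
  rw [deriv_hpoly, Finset.mul_sum]
  refine Finset.sum_congr rfl fun n hn => ?_
  have hn' := Finset.mem_range.mp hn
  have hc : ((m - 2*n : ℕ) : ℝ) = (m : ℝ) - 2 * n := by
    rw [Nat.cast_sub (by omega)]
    push_cast
    rfl
  rw [← hc]
  rcases Nat.eq_zero_or_pos (m - 2*n) with h | h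
  · simp [h]
  · rw [← mul_pow_sub_one h.ne' y]
    ring

/-- `h_m` is an eigenfunction of `𝓛g = g'' − (y/2)g' + g` with eigenvalue `1 − m/2`. -/
theorem hermite_eigenfunction (m : ℕ) (y : ℝ) :
    deriv (deriv (hpoly m)) y - y/2 * deriv (hpoly m) y + hpoly m y =
      (1 - (m : ℝ)/2) * hpoly m y := by
  have hsum : hpoly m y = ∑ n ∈ Finset.range (m/2 + 1), hpolyCoeff m n * y^(m - 2*n) := rfl
  have key : deriv (deriv (hpoly m)) y - 1/2 * (y * deriv (hpoly m) y) + m/2 * hpoly m y = 0 := by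
    rw [deriv_deriv_hpoly_eq_neg_sum, mul_deriv_hpoly, hsum, Finset.mul_sum, Finset.mul_sum,
      ← Finset.sum_neg_distrib, ← Finset.sum_sub_distrib, ← Finset.sum_add_distrib]
    exact Finset.sum_eq_zero fun n _ => by ring
  linear_combination key

end
end

section
/- Let p>1 and define R(y,s) = ∂_y²φ(y,s) − (y/2)∂_yφ(y,s) − φ(y,s)/(p−1) + φ(y,s)^p − ∂_sφ(y,s) and V(y,s) = p φ(y,s)^{p−1} − p/(p−1). Then sup_{y∈ℝ}|R(y,s)| → 0 and ‖V(·,s)‖_{L²_ρ} → 0 as s→∞, where ‖g‖²_{L²_ρ} = ∫_ℝ |g(y)|² e^{−y²/4}/√(4π) dy. -/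
noncomputable section

open Real Set Filter Topology MeasureTheory

/-- The error term `R = ∂_y²φ − (y/2)∂_yφ − φ/(p−1) + φ^p − ∂_sφ`. -/
def Rterm (p y s : ℝ) : ℝ :=
  deriv (deriv (fun z => phi p z s)) y - y/2 * deriv (fun z => phi p z s) y -
    phi p y s / (p - 1) + phi p y s ^ p - deriv (fun σ => phi p y σ) s

/-- The potential `V = p φ^{p−1} − p/(p−1)`. -/
def Vterm (p y s : ℝ) : ℝ := p * phi p y s ^ (p-1) - p/(p-1)

/-- The base `p - 1 + b z²` of the profile. -/
def profBase (p z : ℝ) : ℝ := p - 1 + (p-1)^2/(4*p) * z^2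

/-- The first derivative of the profile. -/
def fprofDeriv (p z : ℝ) : ℝ :=
  -((p-1)/(2*p)) * z * profBase p z ^ (-(1/(p-1)) - 1)

/-- The second derivative of the profile. -/
def fprofDerivTwo (p z : ℝ) : ℝ :=
  -((p-1)/(2*p)) * profBase p z ^ (-(1/(p-1)) - 1) +
    (p-1)^2/(4*p) * z^2 * profBase p z ^ (-(1/(p-1)) - 2)

lemma sub_one_le_profBase {p : ℝ} (hp : 1 < p) (z : ℝ) : p - 1 ≤ profBase p z := by
  have : 0 ≤ (p-1)^2/(4*p) * z^2 := by positivity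
  unfold profBase
  linarith

lemma profBase_pos {p : ℝ} (hp : 1 < p) (z : ℝ) : 0 < profBase p z :=
  lt_of_lt_of_le (by linarith) (sub_one_le_profBase hp z)

lemma hasDerivAt_profBase (p z : ℝ) :
    HasDerivAt (profBase p) ((p-1)^2/(4*p) * (2*z)) z := by
  unfold profBase
  simpa using ((hasDerivAt_pow 2 z).const_mul ((p-1)^2/(4*p))).const_add (p-1)

lemma hasDerivAt_fprof {p : ℝ} (hp : 1 < p) (z : ℝ) :
    HasDerivAt (fprof p) (fprofDeriv p z) z := by
  have h := (hasDerivAt_profBase p z).rpow_const (p := -(1/(p-1)))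
    (Or.inl (profBase_pos hp z).ne')
  have h1 : p - 1 ≠ 0 := by linarith
  have h2 : p ≠ 0 := by linarith
  refine h.congr_deriv ?_
  unfold fprofDeriv
  field_simp
  ring

lemma hasDerivAt_fprofDeriv {p : ℝ} (hp : 1 < p) (z : ℝ) :
    HasDerivAt (fprofDeriv p) (fprofDerivTwo p z) z := by
  have h := (hasDerivAt_profBase p z).rpow_const (p := -(1/(p-1)) - 1)
    (Or.inl (profBase_pos hp z).ne')
  have h1 : p - 1 ≠ 0 := by linarith
  have h2 : p ≠ 0 := by linarith
  refine (((hasDerivAt_id z).const_mul (-((p-1)/(2*p)))).mul h).congr_deriv ?_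
  have e : -(1/(p-1)) - 1 - 1 = -(1/(p-1)) - 2 := by ring
  unfold fprofDerivTwo
  rw [e]
  generalize profBase p z ^ (-(1/(p-1)) - 1) = A
  generalize profBase p z ^ (-(1/(p-1)) - 2) = B
  simp only [id]
  field_simp
  ring

lemma fprof_nonneg {p : ℝ} (hp : 1 < p) (z : ℝ) : 0 ≤ fprof p z :=
  rpow_nonneg (profBase_pos hp z).le _

lemma profBase_rpow_le {p : ℝ} (hp : 1 < p) (z : ℝ) {r : ℝ} (hr : r ≤ 0) :
    profBase p z ^ r ≤ (p-1) ^ r :=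
  rpow_le_rpow_of_nonpos (by linarith) (sub_one_le_profBase hp z) hr

lemma fprof_le_kap {p : ℝ} (hp : 1 < p) (z : ℝ) : fprof p z ≤ kap p := by
  have : 0 < p - 1 := by linarith
  exact profBase_rpow_le hp z (neg_nonpos.2 (by positivity))

lemma kap_rpow_sub_one {p : ℝ} (hp : 1 < p) : kap p ^ (p-1) = 1/(p-1) := by
  have h : 0 < p - 1 := by linarith
  rw [kap, ← rpow_mul h.le]
  have : -(1/(p-1)) * (p-1) = -1 := by field_simp
  rw [this, rpow_neg_one, one_div]

/-- The stationary profile equation `-(z/2) f' - f/(p-1) + f^p = 0`. -/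
lemma fprof_rpow {p : ℝ} (hp : 1 < p) (z : ℝ) :
    fprof p z ^ p = z/2 * fprofDeriv p z + fprof p z / (p-1) := by
  have h : 0 < p - 1 := by linarith
  have hb := profBase_pos hp z
  have e1 : fprof p z ^ p = profBase p z ^ (-(1/(p-1)) - 1) := by
    change (profBase p z ^ (-(1/(p-1)))) ^ p = _
    rw [← rpow_mul hb.le]
    congr 1
    field_simp
    ring
  have e2 : fprof p z = profBase p z ^ (-(1/(p-1)) - 1) * profBase p z := by
    change profBase p z ^ (-(1/(p-1))) = _
    rw [← rpow_add_one hb.ne']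
    congr 1
    ring
  rw [e1, e2, fprofDeriv]
  generalize profBase p z ^ (-(1/(p-1)) - 1) = A
  unfold profBase
  field_simp
  ring

lemma abs_mul_fprofDeriv_le {p : ℝ} (hp : 1 < p) (z : ℝ) :
    |z * fprofDeriv p z| ≤ 2 * kap p / (p-1) := by
  have h : 0 < p - 1 := by linarith
  have hz := fprof_rpow hp z
  have hn : z * fprofDeriv p z ≤ 0 := by
    have : 0 ≤ (p-1)/(2*p) * z^2 * profBase p z ^ (-(1/(p-1)) - 1) := by
      have := rpow_nonneg (profBase_pos hp z).le (-(1/(p-1)) - 1)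
      positivity
    unfold fprofDeriv
    linarith
  have h0 := rpow_nonneg (fprof_nonneg hp z) p
  have hk : fprof p z / (p-1) ≤ kap p / (p-1) :=
    div_le_div_of_nonneg_right (fprof_le_kap hp z) h.le
  rw [abs_of_nonpos hn, mul_div_assoc]
  linarith

lemma abs_fprofDerivTwo_le {p : ℝ} (hp : 1 < p) (z : ℝ) :
    |fprofDerivTwo p z| ≤ ((p-1)/(2*p) + 1) * (p-1) ^ (-(1/(p-1)) - 1) := by
  have h : 0 < p - 1 := by linarith
  have hb := profBase_pos hp z
  have hA : profBase p z ^ (-(1/(p-1)) - 1) ≤ (p-1) ^ (-(1/(p-1)) - 1) := by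
    refine profBase_rpow_le hp z ?_
    have : 0 < 1/(p-1) := by positivity
    linarith
  have hA0 := rpow_nonneg hb.le (-(1/(p-1)) - 1)
  have hB0 := rpow_nonneg hb.le (-(1/(p-1)) - 2)
  have hAB : profBase p z ^ (-(1/(p-1)) - 1) = profBase p z ^ (-(1/(p-1)) - 2) * profBase p z := by
    rw [← rpow_add_one hb.ne']
    congr 1
    ring
  have hle : (p-1)^2/(4*p) * z^2 ≤ profBase p z := by
    unfold profBase
    linarith
  have h2 : (p-1)^2/(4*p) * z^2 * profBase p z ^ (-(1/(p-1)) - 2) ≤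
      profBase p z ^ (-(1/(p-1)) - 1) := by
    rw [hAB, mul_comm]
    exact mul_le_mul_of_nonneg_left hle hB0
  have h3 : 0 ≤ (p-1)^2/(4*p) * z^2 * profBase p z ^ (-(1/(p-1)) - 2) := by positivity
  have hc : 0 ≤ (p-1)/(2*p) := by positivity
  have h4 := mul_le_mul_of_nonneg_left hA hc
  have h5 := mul_nonneg hc hA0
  unfold fprofDerivTwo
  rw [abs_le]
  constructor <;> linarith

lemma deriv_phi_space {p : ℝ} (hp : 1 < p) (s : ℝ) :
    deriv (fun z => phi p z s) = fun y => fprofDeriv p (y / √s) / √s := by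
  funext y
  have h := (hasDerivAt_fprof hp (y / √s)).comp y ((hasDerivAt_id y).div_const (√s))
  refine ((h.add_const (kap p / (4*p*s))).congr_deriv ?_).deriv
  ring

lemma deriv_deriv_phi_space {p : ℝ} (hp : 1 < p) {s : ℝ} (hs : 0 < s) (y : ℝ) :
    deriv (deriv (fun z => phi p z s)) y = fprofDerivTwo p (y / √s) / s := by
  rw [deriv_phi_space hp]
  have h := (hasDerivAt_fprofDeriv hp (y / √s)).comp y ((hasDerivAt_id y).div_const (√s))
  refine ((h.div_const (√s)).congr_deriv ?_).deriv
  rw [mul_one_div, div_div, mul_self_sqrt hs.le]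

lemma deriv_phi_time {p : ℝ} (hp : 1 < p) {s : ℝ} (hs : 0 < s) (y : ℝ) :
    deriv (fun σ => phi p y σ) s =
      -(y / √s * fprofDeriv p (y / √s)) / (2*s) - kap p / (4*p*s^2) := by
  have hr : √s ≠ 0 := (sqrt_pos.2 hs).ne'
  have hp0 : p ≠ 0 := by linarith
  have h1 : HasDerivAt (fun σ => y / √σ) (-(y / √s) / (2*s)) s := by
    refine ((hasDerivAt_const s y).div (hasDerivAt_sqrt hs.ne') hr).congr_deriv ?_
    rw [sq_sqrt hs.le]
    field_simp
    ring
  have h2 : HasDerivAt (fun σ => kap p / (4*p*σ)) (-(kap p / (4*p*s^2))) s := by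
    refine ((hasDerivAt_const s (kap p)).div ((hasDerivAt_id s).const_mul (4*p))
      (by simp [hp0, hs.ne'])).congr_deriv ?_
    simp only [id]
    field_simp
    ring
  refine ((((hasDerivAt_fprof hp (y / √s)).comp s h1).add h2).congr_deriv ?_).deriv
  ring

lemma Rterm_eq {p : ℝ} (hp : 1 < p) {s : ℝ} (hs : 0 < s) (y : ℝ) :
    Rterm p y s =
      (fprofDerivTwo p (y / √s) + y / √s * fprofDeriv p (y / √s) / 2) / s +
        kap p / (4*p*s^2) - kap p / (4*p*s) / (p-1) +
        ((fprof p (y / √s) + kap p / (4*p*s)) ^ p - fprof p (y / √s) ^ p) := by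
  rw [Rterm, deriv_deriv_phi_space hp hs, deriv_phi_space hp, deriv_phi_time hp hs, fprof_rpow hp]
  simp only [phi]
  ring

lemma tendsto_kap_div {p : ℝ} (hp : 1 < p) :
    Tendsto (fun s => kap p / (4*p*s)) atTop (𝓝 0) :=
  (tendsto_id.const_mul_atTop (by linarith : 0 < 4*p)).const_div_atTop (kap p)

/-- Adding a small constant changes `x ^ p` uniformly little on a bounded interval. -/
lemma exists_rpow_add_sub_lt {p K : ℝ} (hp : 0 < p) {ε : ℝ} (hε : 0 < ε) :
    ∃ δ > 0, ∀ x ∈ Icc 0 K, ∀ d, 0 ≤ d → d < δ → |(x + d) ^ p - x ^ p| < ε := by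
  have huc : UniformContinuousOn (fun x : ℝ => x ^ p) (Icc 0 (K+1)) :=
    isCompact_Icc.uniformContinuousOn_of_continuous
      (continuous_rpow_const hp.le).continuousOn
  obtain ⟨δ, hδ, h⟩ := Metric.uniformContinuousOn_iff.1 huc ε hε
  refine ⟨min δ 1, by positivity, fun x hx d hd hdδ => ?_⟩
  have hd1 := lt_of_lt_of_le hdδ (min_le_left _ _)
  have hd2 := lt_of_lt_of_le hdδ (min_le_right _ _)
  have := h (x + d) ⟨by linarith [hx.1], by linarith [hx.2]⟩ x ⟨hx.1, by linarith [hx.2]⟩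
    (by rwa [Real.dist_eq, add_sub_cancel_left, abs_of_nonneg hd])
  rwa [Real.dist_eq] at this

lemma exists_forall_abs_Rterm_le {p : ℝ} (hp : 1 < p) {ε : ℝ} (hε : 0 < ε) :
    ∃ s1 : ℝ, ∀ s ≥ s1, ∀ y : ℝ, |Rterm p y s| ≤ ε := by
  have hp1 : 0 < p - 1 := by linarith
  have hp0 : 0 < p := by linarith
  have hk := kap_pos hp
  obtain ⟨δ, hδ, hd⟩ := exists_rpow_add_sub_lt (K := kap p) hp0 (half_pos hε)
  let C := ((p-1)/(2*p) + 1) * (p-1) ^ (-(1/(p-1)) - 1) + kap p / (p-1)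
  have hT : Tendsto (fun s : ℝ => C / s + kap p / (4*p*s) * s⁻¹ + kap p / (4*p*s) / (p-1))
      atTop (𝓝 0) := by
    simpa using ((tendsto_id.const_div_atTop C).add
      ((tendsto_kap_div hp).mul tendsto_inv_atTop_zero)).add
      ((tendsto_kap_div hp).div_const (p-1))
  obtain ⟨s1, h1⟩ := eventually_atTop.1 (((hT.eventually_lt_const (half_pos hε)).and
    ((tendsto_kap_div hp).eventually_lt_const hδ)).and (eventually_gt_atTop 0))
  refine ⟨s1, fun s hs y => ?_⟩
  obtain ⟨⟨hs1, hs2⟩, hs0⟩ := h1 s hs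
  have hD := hd (fprof p (y / √s)) ⟨fprof_nonneg hp _, fprof_le_kap hp _⟩ (kap p / (4*p*s))
    (by positivity) hs2
  have hC : |fprofDerivTwo p (y / √s) + y / √s * fprofDeriv p (y / √s) / 2| ≤ C := by
    have a1 := abs_fprofDerivTwo_le hp (y / √s)
    have a2 := abs_mul_fprofDeriv_le hp (y / √s)
    rw [mul_div_assoc] at a2
    refine (abs_add_le _ _).trans (add_le_add a1 ?_)
    rw [abs_div, abs_two]
    linarith
  have hC' : |(fprofDerivTwo p (y / √s) + y / √s * fprofDeriv p (y / √s) / 2) / s| ≤ C / s := by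
    rw [abs_div, abs_of_pos hs0]
    exact div_le_div_of_nonneg_right hC hs0.le
  have e : kap p / (4*p*s^2) = kap p / (4*p*s) * s⁻¹ := by
    field_simp
  have n1 : 0 ≤ kap p / (4*p*s) * s⁻¹ := by positivity
  have n2 : 0 ≤ kap p / (4*p*s) / (p-1) := by positivity
  rw [Rterm_eq hp hs0, e]
  rw [abs_le] at hC' ⊢
  rw [abs_lt] at hD
  constructor <;> linarith [hC'.1, hC'.2, hD.1, hD.2]

lemma continuous_fprof {p : ℝ} (hp : 1 < p) : Continuous (fprof p) :=
  continuous_iff_continuousAt.2 fun z => (hasDerivAt_fprof hp z).continuousAt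

lemma continuous_Vterm {p : ℝ} (hp : 1 < p) (s : ℝ) : Continuous fun y => Vterm p y s := by
  have h : Continuous fun y => phi p y s :=
    ((continuous_fprof hp).comp (continuous_id.div_const _)).add continuous_const
  exact (((continuous_rpow_const (by linarith)).comp h).const_mul p).sub continuous_const

lemma tendsto_phi {p : ℝ} (hp : 1 < p) (y : ℝ) :
    Tendsto (fun s => phi p y s) atTop (𝓝 (kap p)) := by
  have h0 : fprof p 0 = kap p := by simp [fprof, kap]
  have h1 : Tendsto (fun s => fprof p (y / √s)) atTop (𝓝 (kap p)) :=
    h0 ▸ ((continuous_fprof hp).tendsto 0).comp (tendsto_sqrt_atTop.const_div_atTop y)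
  simpa [phi] using h1.add (tendsto_kap_div hp)

lemma tendsto_Vterm {p : ℝ} (hp : 1 < p) (y : ℝ) :
    Tendsto (fun s => Vterm p y s) atTop (𝓝 0) := by
  have h := (((tendsto_phi hp y).rpow_const (p := p-1) (Or.inl (kap_pos hp).ne')).const_mul
    p).sub_const (p/(p-1))
  rwa [kap_rpow_sub_one hp, mul_one_div, sub_self] at h

lemma abs_Vterm_le {p : ℝ} (hp : 1 < p) {s : ℝ} (hs : 1 ≤ s) (y : ℝ) :
    |Vterm p y s| ≤ p * (2 * kap p) ^ (p-1) + p/(p-1) := by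
  have hp1 : 0 < p - 1 := by linarith
  have hp0 : 0 < p := by linarith
  have hk := kap_pos hp
  have hd : kap p / (4*p*s) ≤ kap p := div_le_self hk.le (by nlinarith)
  have hd0 : 0 ≤ kap p / (4*p*s) := by positivity
  have h0 : 0 ≤ phi p y s := add_nonneg (fprof_nonneg hp _) hd0
  have h1 : phi p y s ≤ 2 * kap p := by
    have := fprof_le_kap hp (y / √s)
    unfold phi
    linarith
  have h2 := mul_le_mul_of_nonneg_left (rpow_le_rpow h0 h1 hp1.le) hp0.le
  have h3 : 0 ≤ p * phi p y s ^ (p-1) := by positivity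
  have h4 : 0 ≤ p/(p-1) := by positivity
  unfold Vterm
  rw [abs_le]
  constructor <;> linarith

lemma continuous_rho : Continuous rho := by
  unfold rho
  fun_prop

lemma integrable_rho : Integrable rho := by
  have h := (integrable_exp_neg_mul_sq (b := 1/4) (by norm_num)).div_const (√(4*π))
  refine h.congr (Eventually.of_forall fun y => ?_)
  simp only [rho]
  ring_nf

lemma tendsto_integral_Vterm_sq {p : ℝ} (hp : 1 < p) :
    Tendsto (fun s => ∫ y : ℝ, (Vterm p y s)^2 * rho y) atTop (𝓝 0) := by
  let M := p * (2 * kap p) ^ (p-1) + p/(p-1)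
  have h : Tendsto (fun s => ∫ y : ℝ, (Vterm p y s)^2 * rho y) atTop (𝓝 (∫ _ : ℝ, (0:ℝ))) := by
    refine tendsto_integral_filter_of_dominated_convergence (fun y => M^2 * rho y) ?_ ?_
      (integrable_rho.const_mul _) ?_
    · exact Eventually.of_forall fun s =>
        (((continuous_Vterm hp s).pow 2).mul continuous_rho).aestronglyMeasurable
    · filter_upwards [eventually_ge_atTop 1] with s hs
      refine Eventually.of_forall fun y => ?_
      rw [Real.norm_of_nonneg (mul_nonneg (sq_nonneg _) (rho_nonneg y)), ← sq_abs]
      exact mul_le_mul_of_nonneg_right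
        (pow_le_pow_left₀ (abs_nonneg _) (abs_Vterm_le hp hs y) 2) (rho_nonneg y)
    · refine Eventually.of_forall fun y => ?_
      simpa using ((tendsto_Vterm hp y).pow 2).mul_const (rho y)
  simpa using h

/-- `‖R(·,s)‖_{L^∞} → 0` and `‖V(·,s)‖_{L²_ρ} → 0` as `s → ∞`. -/
theorem R_and_V_vanish (p : ℝ) (hp : 1 < p) :
    (∀ ε > (0:ℝ), ∃ s1 : ℝ, ∀ s ≥ s1, ∀ y : ℝ, |Rterm p y s| ≤ ε) ∧
    Tendsto (fun s => Real.sqrt (∫ y : ℝ, (Vterm p y s)^2 * rho y)) atTop (𝓝 0) := by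
  exact ⟨fun _ hε => exists_forall_abs_Rterm_le hp hε, by
    simpa using (tendsto_integral_Vterm_sq hp).sqrt⟩

end
end
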